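/- Let (A, m_A) be a local Artinian C-algebra, L a dgLa over C, and consider the Maurer-Cartan set MC(L ⊗ m_A ⊗ A^*(Δ_•)) where A^*(Δ_n) are polynomial de Rham forms. Then the restriction map A^*(Δ_n) → A^*(Λ^k_n) to the k-th horn is a quasi-isomorphism, and consequently the obstruction to extending a Maurer-Cartan element from the k-th horn Λ^k_n to Δ_n along a small extension A → B vanishes: given compatible Maurer-Cartan elements on the faces of the horn with compatible lift over A, an extension to Δ_n over A exists. -/

import Mathlib

/-!
STATEMENT 14: The restriction map A^*(Δ_n) → A^*(Λ^k_n) to the k-th horn is a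
quasi-isomorphism, and consequently the obstruction to extending a
Maurer-Cartan element of L ⊗ m_A ⊗ A^*(Δ_•) from the k-th horn to Δ_n along a
small extension A → B vanishes: given compatible Maurer-Cartan elements on the
faces of the horn over A together with a compatible Maurer-Cartan lift over B
on the whole simplex, an extension to Δ_n over A exists.
(We work with simplices Δ_{n+2}, so that all coface maps involved exist;
A^*(Λ^k_{n+2}) is the space of tuples of forms on the facets ≠ k of Δ_{n+2}
compatible along intersections.)
-/

structure SimplexForms (n : ℕ) where
  A : Type
  [ringA : Ring A]
  [algA : Algebra ℂ A]
  grading : ℕ → Submodule ℂ A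
  [gradedA : GradedAlgebra grading]
  gcomm : ∀ (p q : ℕ) (a b : A), a ∈ grading p → b ∈ grading q →
    a * b = ((-1 : ℤ) ^ (p * q)) • (b * a)
  d : A →ₗ[ℂ] A
  d_mem : ∀ (q : ℕ) (a : A), a ∈ grading q → d a ∈ grading (q + 1)
  d_sq : ∀ a : A, d (d a) = 0
  leibniz : ∀ (p : ℕ) (a b : A), a ∈ grading p →
    d (a * b) = d a * b + ((-1 : ℤ) ^ p) • (a * d b)
  x : Fin (n + 1) → A
  x_mem : ∀ i, x i ∈ grading 0
  sum_x : ∑ i, x i = 1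
  sum_dx : ∑ i, d (x i) = 0

attribute [instance] SimplexForms.ringA SimplexForms.algA SimplexForms.gradedA

/-- `Ω` is the polynomial de Rham algebra `A^*(Δ_n)`: universal property. -/
def IsPolyDeRham {n : ℕ} (Ω : SimplexForms n) : Prop :=
  ∀ B : SimplexForms n, ∃! φ : Ω.A →ₐ[ℂ] B.A,
    (∀ a, φ (Ω.d a) = B.d (φ a)) ∧
    (∀ (p : ℕ) (a : Ω.A), a ∈ Ω.grading p → φ a ∈ B.grading p) ∧
    (∀ i, φ (Ω.x i) = B.x i)

/-- The property of being the pullback morphism `a^*` induced by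
`a : [n] → [m]`: a morphism of dgas (commuting with `d` and preserving the
grading) with `φ(x_j) = Σ_{i : a i = j} x_i`. -/
def PullbackProp {m n : ℕ} (Ωm : SimplexForms m) (Ωn : SimplexForms n)
    (a : Fin (n + 1) → Fin (m + 1)) (φ : Ωm.A →ₐ[ℂ] Ωn.A) : Prop :=
  (∀ y, φ (Ωm.d y) = Ωn.d (φ y)) ∧
  (∀ (p : ℕ) (y : Ωm.A), y ∈ Ωm.grading p → φ y ∈ Ωn.grading p) ∧
  (∀ j : Fin (m + 1),
    φ (Ωm.x j) = ∑ i ∈ Finset.univ.filter (fun i => a i = j), Ωn.x i)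


open TensorProduct

/-- the sign (-1)^n for n : ℤ. -/
def sgn (n : ℤ) : ℤ := ((-1 : ℤˣ) ^ n : ℤˣ)

/-- A (ℤ-graded) differential graded Lie algebra over ℂ. -/
structure GradedDGLA where
  L : Type
  [acg : AddCommGroup L]
  [mod : Module ℂ L]
  gr : ℤ → Submodule ℂ L
  br : L →ₗ[ℂ] L →ₗ[ℂ] L
  dL : L →ₗ[ℂ] L
  br_mem : ∀ (p q : ℤ) (v w : L), v ∈ gr p → w ∈ gr q → br v w ∈ gr (p + q)
  d_mem : ∀ (p : ℤ) (v : L), v ∈ gr p → dL v ∈ gr (p + 1)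
  d_sq : ∀ v : L, dL (dL v) = 0
  skew : ∀ (p q : ℤ) (v w : L), v ∈ gr p → w ∈ gr q →
    br v w = -(sgn (p * q) • br w v)
  jacobi : ∀ (p q : ℤ) (v w z : L), v ∈ gr p → w ∈ gr q →
    br v (br w z) = br (br v w) z + sgn (p * q) • br w (br v z)
  leib : ∀ (p : ℤ) (v w : L), v ∈ gr p →
    dL (br v w) = br (dL v) w + sgn p • br v (dL w)

attribute [instance] GradedDGLA.acg GradedDGLA.mod

/-- The submodule of `L ⊗ A ⊗ A^*(Δ_k)` of elements of total degree 1 with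
coefficients in the ideal `m ⊆ A`, i.e. `⊕_q L^{1-q} ⊗ m ⊗ A^q(Δ_k)`. -/
noncomputable def Deg1m (F : ∀ k, SimplexForms k) (L : GradedDGLA)
    (A : Type) [CommRing A] [Algebra ℂ A] (m : Submodule ℂ A) (k : ℕ) :
    Submodule ℂ ((L.L ⊗[ℂ] A) ⊗[ℂ] (F k).A) :=
  ⨆ q : ℕ, LinearMap.range
    (TensorProduct.map (TensorProduct.map (L.gr (1 - (q : ℤ))).subtype m.subtype)
      ((F k).grading q).subtype)

/-- The Maurer–Cartan condition for `φ ∈ L¹(⊗ m_A ⊗ A^*(Δ_k))`, relative to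
given total differential `D` and bracket `Br` on `L ⊗ A ⊗ A^*(Δ_k)`. -/
def IsMCsimp (F : ∀ k, SimplexForms k) (L : GradedDGLA)
    (A : Type) [CommRing A] [Algebra ℂ A] (m : Submodule ℂ A)
    (D : ∀ k, (L.L ⊗[ℂ] A) ⊗[ℂ] (F k).A →ₗ[ℂ] (L.L ⊗[ℂ] A) ⊗[ℂ] (F k).A)
    (Br : ∀ k, (L.L ⊗[ℂ] A) ⊗[ℂ] (F k).A →ₗ[ℂ]
      (L.L ⊗[ℂ] A) ⊗[ℂ] (F k).A →ₗ[ℂ] (L.L ⊗[ℂ] A) ⊗[ℂ] (F k).A)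
    (k : ℕ) (φ : (L.L ⊗[ℂ] A) ⊗[ℂ] (F k).A) : Prop :=
  φ ∈ Deg1m F L A m k ∧ D k φ + (1 / 2 : ℂ) • Br k φ φ = 0


/-- Compatibility of a tuple of forms on the facets `≠ k` of `Δ_{n+2}`, i.e. the
condition defining the space `A^*(Λ^k_{n+2})` of polynomial forms on the k-th
horn (equation (3.5)). -/
def HornCompat (F : ∀ k, SimplexForms k)
    (pb : ∀ (k : ℕ) (i : Fin (k + 2)), (F (k + 1)).A →ₐ[ℂ] (F k).A)
    (n : ℕ) (k : Fin (n + 3))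
    (t : ∀ i : Fin (n + 3), i ≠ k → (F (n + 1)).A) : Prop :=
  ∀ (i j : Fin (n + 3)) (hi : i ≠ k) (hj : j ≠ k) (hij : i.1 < j.1),
    pb n ⟨i.1, by have := j.isLt; omega⟩ (t j hj) =
      pb n ⟨j.1 - 1, by have := j.isLt; omega⟩ (t i hi)

/-!
The horn `Λ^k` is handled through pullbacks of forms along maps of vertices. The map of simplices
that moves vertex `i` to `k` and fixes the others gives a section of the restriction to the facet `i
≠ k`, and correcting the facets one at a time with these sections extends compatible forms on the
horn to the simplex. The linear contraction of the simplex to the vertex `k` preserves every facet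
of the horn; integrating over the time variable of its pullback gives a cochain homotopy `h` between
the identity and the value at `k`, and `h` restricts to these facets. So `h` maps a closed form
vanishing on the horn to a primitive which also vanishes there, which yields the quasi-isomorphism.

For Maurer–Cartan elements, first extend the `ψ i` to a lift `φ` of `φ_B` of degree `1`. Its
curvature has coefficients in the kernel of the small extension, hence is a cocycle by the Bianchi
identity, and it vanishes on the horn. By the same contraction it is `D v` with `v` vanishing on the
horn, and `φ - v` is the required Maurer–Cartan element.
-/

open Polynomial

/-! ### Morphisms of differential graded algebras -/

/-- `f` is a morphism of differential graded algebras; the coordinates `x i` are not required to be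
preserved. -/
structure IsDgaHom {m n : ℕ} (P : SimplexForms m) (Q : SimplexForms n) (f : P.A →ₐ[ℂ] Q.A) :
    Prop where
  map_d (a : P.A) : f (P.d a) = Q.d (f a)
  map_mem {p : ℕ} {a : P.A} (ha : a ∈ P.grading p) : f a ∈ Q.grading p

theorem IsDgaHom.id {m : ℕ} (P : SimplexForms m) : IsDgaHom P P (AlgHom.id ℂ P.A) :=
  ⟨fun _ => rfl, fun ha => ha⟩

theorem IsDgaHom.comp {m n r : ℕ} {P : SimplexForms m} {Q : SimplexForms n} {R : SimplexForms r}
    {g : Q.A →ₐ[ℂ] R.A} {f : P.A →ₐ[ℂ] Q.A} (hg : IsDgaHom Q R g) (hf : IsDgaHom P Q f) :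
    IsDgaHom P R (g.comp f) :=
  ⟨fun a => by simp [hf.map_d, hg.map_d], fun ha => hg.map_mem (hf.map_mem ha)⟩

theorem SimplexForms.one_mem {n : ℕ} (Q : SimplexForms n) : (1 : Q.A) ∈ Q.grading 0 :=
  SetLike.GradedOne.one_mem

theorem SimplexForms.d_one {n : ℕ} (Q : SimplexForms n) : Q.d 1 = 0 := by
  simpa using Q.leibniz 0 1 1 Q.one_mem

/-- The dga `Q` with its barycentric coordinates replaced by `y`. -/
def SimplexForms.withCoords {m n : ℕ} (Q : SimplexForms n) (y : Fin (m + 1) → Q.A)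
    (hy : ∀ i, y i ∈ Q.grading 0) (hsum : ∑ i, y i = 1) : SimplexForms m :=
  { Q with x := y, x_mem := hy, sum_x := hsum, sum_dx := by rw [← map_sum, hsum, Q.d_one] }

theorem IsPolyDeRham.exists_hom {m n : ℕ} {P : SimplexForms m} (hP : IsPolyDeRham P)
    (Q : SimplexForms n) (y : Fin (m + 1) → Q.A) (hy : ∀ i, y i ∈ Q.grading 0)
    (hsum : ∑ i, y i = 1) : ∃ f : P.A →ₐ[ℂ] Q.A, IsDgaHom P Q f ∧ ∀ i, f (P.x i) = y i :=
  have ⟨f, ⟨hd, hmem, hx⟩, _⟩ := hP (Q.withCoords y hy hsum)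
  ⟨f, ⟨hd, hmem _ _⟩, hx⟩

theorem IsPolyDeRham.hom_ext {m n : ℕ} {P : SimplexForms m} (hP : IsPolyDeRham P)
    {Q : SimplexForms n} {f g : P.A →ₐ[ℂ] Q.A} (hf : IsDgaHom P Q f) (hg : IsDgaHom P Q g)
    (h : ∀ i, f (P.x i) = g (P.x i)) : f = g :=
  have hsum : ∑ i, f (P.x i) = 1 := by rw [← map_sum, P.sum_x, map_one]
  (hP (Q.withCoords (fun i => f (P.x i)) (fun i => hf.map_mem (P.x_mem i)) hsum)).unique
    ⟨hf.map_d, fun _ _ => hf.map_mem, fun _ => rfl⟩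
    ⟨hg.map_d, fun _ _ => hg.map_mem, fun i => (h i).symm⟩

section Pullback

variable {l m n : ℕ} {P : SimplexForms l} {Q : SimplexForms m} {R : SimplexForms n}
  {a : Fin (m + 1) → Fin (l + 1)} {b : Fin (n + 1) → Fin (m + 1)}

theorem PullbackProp.isDgaHom {f : P.A →ₐ[ℂ] Q.A} (hf : PullbackProp P Q a f) : IsDgaHom P Q f :=
  ⟨hf.1, hf.2.1 _ _⟩

theorem PullbackProp.map_x {f : P.A →ₐ[ℂ] Q.A} (hf : PullbackProp P Q a f) (j : Fin (l + 1)) :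
    f (P.x j) = ∑ i with a i = j, Q.x i :=
  hf.2.2 j

theorem PullbackProp.id (P : SimplexForms l) : PullbackProp P P id (AlgHom.id ℂ P.A) :=
  ⟨fun _ => rfl, fun _ _ h => h, fun j => by simp [Finset.sum_filter]⟩

theorem PullbackProp.comp {f : P.A →ₐ[ℂ] Q.A} {g : Q.A →ₐ[ℂ] R.A} (hg : PullbackProp Q R b g)
    (hf : PullbackProp P Q a f) : PullbackProp P R (a ∘ b) (g.comp f) := by
  have h := hg.isDgaHom.comp hf.isDgaHom
  refine ⟨h.map_d, fun _ _ => h.map_mem, fun j => ?_⟩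
  simp only [AlgHom.comp_apply, hf.map_x, map_sum, hg.map_x]
  rw [← Finset.sum_fiberwise_of_maps_to (g := b) (t := {i | a i = j}) (by simp)]
  exact Finset.sum_congr rfl fun i hi => Finset.sum_congr (by ext; aesop) fun _ _ => rfl

theorem PullbackProp.unique {f g : P.A →ₐ[ℂ] Q.A} (hP : IsPolyDeRham P)
    (hf : PullbackProp P Q a f) (hg : PullbackProp P Q a g) : f = g :=
  hP.hom_ext hf.isDgaHom hg.isDgaHom fun i => by rw [hf.map_x, hg.map_x]

theorem IsPolyDeRham.exists_pullback (hP : IsPolyDeRham P) (Q : SimplexForms m)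
    (a : Fin (m + 1) → Fin (l + 1)) : ∃ f, PullbackProp P Q a f :=
  have ⟨f, hf, hx⟩ := hP.exists_hom Q (fun j => ∑ i with a i = j, Q.x i)
    (fun _ => Submodule.sum_mem _ fun i _ => Q.x_mem i) (by rw [Finset.sum_fiberwise, Q.sum_x])
  ⟨f, hf.map_d, fun _ _ => hf.map_mem, hx⟩

end Pullback

/-! ### The sign involution of a graded algebra -/

section GradeInvolution

variable {R A M : Type*} [CommRing R] [Ring A] [Algebra R A] (𝒜 : ℕ → Submodule R A)
  [GradedAlgebra 𝒜]

theorem linearMap_ext_on_grading [AddCommGroup M] [Module R M] {f g : A →ₗ[R] M}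
    (h : ∀ p, ∀ a ∈ 𝒜 p, f a = g a) : f = g :=
  DirectSum.decompose_lhom_ext 𝒜 fun p => LinearMap.ext fun a => h p a a.2

/-- The sign involution `a ↦ (-1)^p a`, `a` homogeneous of degree `p`, of a graded algebra. With it
the Leibniz rule can be written without reference to degrees. -/
noncomputable def gradeInvolution : A →ₐ[R] A :=
  (DirectSum.toAlgebra R (fun p => 𝒜 p) (fun p => (-1 : R) ^ p • (𝒜 p).subtype) (by simp)
    (fun {p q} a b => by
      simp [pow_add, smul_smul, mul_comm])).comp
    (DirectSum.decomposeAlgEquiv 𝒜).toAlgHom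

variable {𝒜}

theorem gradeInvolution_of_mem {p : ℕ} {a : A} (ha : a ∈ 𝒜 p) :
    gradeInvolution 𝒜 a = (-1 : ℤ) ^ p • a := by
  have h : gradeInvolution 𝒜 a = (-1 : R) ^ p • a := by
    simp only [gradeInvolution, AlgHom.comp_apply, DirectSum.toAlgebra_apply]
    exact (congrArg _ (DirectSum.decompose_of_mem 𝒜 ha)).trans
      (DirectSum.toSemiring_of (A := fun p => 𝒜 p) _ _ _ p ⟨a, ha⟩)
  simp [h, Algebra.smul_def]

variable (𝒜) in
theorem gradeInvolution_gradeInvolution (a : A) :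
    gradeInvolution 𝒜 (gradeInvolution 𝒜 a) = a := by
  suffices (gradeInvolution 𝒜).toLinearMap ∘ₗ (gradeInvolution 𝒜).toLinearMap = LinearMap.id from
    LinearMap.congr_fun this a
  refine linearMap_ext_on_grading 𝒜 fun p a ha => ?_
  simp [-zsmul_eq_mul, gradeInvolution_of_mem ha, smul_smul, ← pow_add]

end GradeInvolution

namespace SimplexForms

variable {m n : ℕ} (P : SimplexForms m) (Q : SimplexForms n)

theorem gradeInvolution_d (a : P.A) :
    gradeInvolution P.grading (P.d a) = -P.d (gradeInvolution P.grading a) := by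
  suffices (gradeInvolution P.grading).toLinearMap ∘ₗ P.d =
      -(P.d ∘ₗ (gradeInvolution P.grading).toLinearMap) from LinearMap.congr_fun this a
  refine linearMap_ext_on_grading P.grading fun p a ha => ?_
  simp [-zsmul_eq_mul, gradeInvolution_of_mem ha, gradeInvolution_of_mem (P.d_mem p a ha), pow_succ]

theorem d_mul (a b : P.A) :
    P.d (a * b) = P.d a * b + gradeInvolution P.grading a * P.d b := by
  suffices P.d ∘ₗ LinearMap.mulRight ℂ b = LinearMap.mulRight ℂ b ∘ₗ P.d +
      LinearMap.mulRight ℂ (P.d b) ∘ₗ (gradeInvolution P.grading).toLinearMap from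
    LinearMap.congr_fun this a
  refine linearMap_ext_on_grading P.grading fun p a ha => ?_
  simp [P.leibniz p a b ha, gradeInvolution_of_mem ha, mul_assoc]

end SimplexForms

theorem IsDgaHom.map_gradeInvolution {m n : ℕ} {P : SimplexForms m} {Q : SimplexForms n}
    {f : P.A →ₐ[ℂ] Q.A} (hf : IsDgaHom P Q f) (a : P.A) :
    f (gradeInvolution P.grading a) = gradeInvolution Q.grading (f a) := by
  suffices f.toLinearMap ∘ₗ (gradeInvolution P.grading).toLinearMap =
      (gradeInvolution Q.grading).toLinearMap ∘ₗ f.toLinearMap from LinearMap.congr_fun this a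
  refine linearMap_ext_on_grading P.grading fun p a ha => ?_
  simp [gradeInvolution_of_mem ha, gradeInvolution_of_mem (hf.map_mem ha)]

/-! ### Forms on a product with the affine line -/

section Prod

variable {R M N : Type*} [Ring R] [AddCommGroup M] [Module R M] [AddCommGroup N] [Module R N]

theorem iSup_submodule_prod {ι : Sort*} (p : ι → Submodule R M) (q : ι → Submodule R N) :
    ⨆ i, (p i).prod (q i) = (⨆ i, p i).prod (⨆ i, q i) := by
  simp only [LinearMap.prod_eq_sup_map, Submodule.map_iSup, iSup_sup_eq]

theorem isInternal_prod {ι : Type*} [DecidableEq ι] {p : ι → Submodule R M} {q : ι → Submodule R N}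
    (hp : DirectSum.IsInternal p) (hq : DirectSum.IsInternal q) :
    DirectSum.IsInternal fun i => (p i).prod (q i) := by
  refine DirectSum.isInternal_submodule_of_iSupIndep_of_iSup_eq_top (fun i => ?_) ?_
  · simp only [iSup_submodule_prod, disjoint_iff, Submodule.prod_inf_prod,
      (hp.submodule_iSupIndep i).eq_bot, (hq.submodule_iSupIndep i).eq_bot, Submodule.prod_bot]
  · rw [iSup_submodule_prod, hp.submodule_iSup_eq_top, hq.submodule_iSup_eq_top,
      Submodule.prod_top]

end Prod

namespace SimplexForms

section PolynomialExtension

variable {m n : ℕ} (P : SimplexForms m) (Q : SimplexForms n)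

/-- The homogeneous part of degree `p` of `ℂ[t] ⊗ Q`, where `t` has degree `0`. -/
noncomputable def polynomialGrading (p : ℕ) : Submodule ℂ (ℂ[X] ⊗[ℂ] Q.A) :=
  ((Q.grading p).baseChange ℂ[X]).restrictScalars ℂ

noncomputable instance : GradedAlgebra Q.polynomialGrading :=
  inferInstanceAs (GradedAlgebra fun p => ((Q.grading p).baseChange ℂ[X]).restrictScalars ℂ)

variable {Q}

theorem tmul_mem_polynomialGrading {p : ℕ} (f : ℂ[X]) {a : Q.A} (ha : a ∈ Q.grading p) :
    f ⊗ₜ a ∈ Q.polynomialGrading p :=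
  Submodule.tmul_mem_baseChange_of_mem f ha

theorem polynomialGrading_induction {p : ℕ}
    {motive : ∀ u : ℂ[X] ⊗[ℂ] Q.A, u ∈ Q.polynomialGrading p → Prop}
    (zero : motive 0 (zero_mem _))
    (tmul : ∀ f a ha, motive (f ⊗ₜ a) (tmul_mem_polynomialGrading f ha))
    (add : ∀ u v hu hv, motive u hu → motive v hv → motive (u + v) (add_mem hu hv))
    {u : ℂ[X] ⊗[ℂ] Q.A} (hu : u ∈ Q.polynomialGrading p) : motive u hu := by
  obtain ⟨u, rfl⟩ := Submodule.toBaseChange_surjective' ℂ[X] _ hu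
  induction u with
  | zero => simpa using zero
  | tmul f a => exact tmul f a a.2
  | add u v ihu ihv =>
    simpa using add _ _ (Submodule.coe_mem _) (Submodule.coe_mem _) (ihu _) (ihv _)

theorem lTensor_mem_polynomialGrading {p q : ℕ} {g : P.A →ₗ[ℂ] Q.A}
    (hg : ∀ a ∈ P.grading p, g a ∈ Q.grading q) {u : ℂ[X] ⊗[ℂ] P.A}
    (hu : u ∈ P.polynomialGrading p) : g.lTensor ℂ[X] u ∈ Q.polynomialGrading q := by
  induction hu using polynomialGrading_induction with
  | zero => simp
  | tmul f a ha => exact tmul_mem_polynomialGrading f (hg a ha)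
  | add u v _ _ hu hv => rw [map_add]; exact add_mem hu hv

variable (Q)

/-- The dga `ℂ[t] ⊗ Q` of forms depending polynomially on a parameter `t` (without `dt`). -/
noncomputable def polynomialExtension : SimplexForms n where
  A := ℂ[X] ⊗[ℂ] Q.A
  grading := Q.polynomialGrading
  gcomm p q u v hu hv := by
    induction hu using polynomialGrading_induction with
    | zero => simp
    | add u u' _ _ hu hu' => simp [add_mul, mul_add, hu, hu']
    | tmul f a ha =>
      induction hv using polynomialGrading_induction with
      | zero => simp
      | add v v' _ _ hv hv' => simp [add_mul, mul_add, hv, hv']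
      | tmul g b hb =>
        simp [-zsmul_eq_mul, Q.gcomm p q a b ha hb, mul_comm f g, TensorProduct.tmul_smul]
  d := Q.d.lTensor ℂ[X]
  d_mem p _ := lTensor_mem_polynomialGrading Q (Q.d_mem p)
  d_sq u := by
    rw [← LinearMap.lTensor_comp_apply, show Q.d ∘ₗ Q.d = 0 from LinearMap.ext Q.d_sq]
    simp
  leibniz p u v hu := by
    induction hu using polynomialGrading_induction with
    | zero => simp
    | add u u' _ _ hu hu' => simp [add_mul, hu, hu']; abel
    | tmul f a ha =>
      induction v with
      | zero => simp
      | add v v' hv hv' => simp [mul_add, hv, hv']; abel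
      | tmul g b =>
        simp [-zsmul_eq_mul, Q.leibniz p a b ha, TensorProduct.tmul_add, TensorProduct.tmul_smul]
  x i := 1 ⊗ₜ Q.x i
  x_mem i := tmul_mem_polynomialGrading 1 (Q.x_mem i)
  sum_x := by rw [← TensorProduct.tmul_sum, Q.sum_x]; rfl
  sum_dx := by simp [← TensorProduct.tmul_sum, Q.sum_dx]

end PolynomialExtension

section AdjoinDt

variable {n : ℕ} (P : SimplexForms n)

/-- `δ` is a derivation of degree `0` of the dga `P` commuting with the differential. -/
structure IsDgaDerivation (δ : P.A →ₗ[ℂ] P.A) : Prop where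
  map_mem {p : ℕ} {a : P.A} (ha : a ∈ P.grading p) : δ a ∈ P.grading p
  map_mul (a b : P.A) : δ (a * b) = δ a * b + a * δ b
  map_d (a : P.A) : δ (P.d a) = P.d (δ a)

/-- The bimodule `dt · P` with `dt` of degree `1`. As `a · dt = ± dt · a`, the left action is
twisted by the sign involution. -/
def DtMultiples : Type := P.A

namespace DtMultiples

instance : AddCommGroup P.DtMultiples := inferInstanceAs (AddCommGroup P.A)

instance : Module ℂ P.DtMultiples := inferInstanceAs (Module ℂ P.A)

instance : Module P.Aᵐᵒᵖ P.DtMultiples := inferInstanceAs (Module P.Aᵐᵒᵖ P.A)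

noncomputable instance : Module P.A P.DtMultiples :=
  Module.compHom P.A (gradeInvolution P.grading).toRingHom

/-- The form `c` as the element `dt · c`. -/
def mk : P.A ≃ₗ[ℂ] P.DtMultiples := LinearEquiv.refl ℂ P.A

variable {P}

theorem smul_mk (a c : P.A) : a • mk P c = mk P (gradeInvolution P.grading a * c) := rfl

theorem op_smul_mk (a c : P.A) : MulOpposite.op a • mk P c = mk P (c * a) := rfl

instance : SMulCommClass P.A P.Aᵐᵒᵖ P.DtMultiples :=
  ⟨fun a b => (mk P).surjective.forall.2 fun c => by
    induction b with | h b => simp only [smul_mk, op_smul_mk, mul_assoc]⟩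

instance : IsScalarTower ℂ P.A P.DtMultiples :=
  ⟨fun r a => (mk P).surjective.forall.2 fun c => congrArg (mk P) <|
    show gradeInvolution P.grading (r • a) * c = r • (gradeInvolution P.grading a * c) by simp⟩

instance : IsScalarTower ℂ P.Aᵐᵒᵖ P.DtMultiples :=
  ⟨fun r a => (mk P).surjective.forall.2 fun c => by
    induction a with | h a => simp [op_smul_mk, ← map_smul, ← MulOpposite.op_smul]⟩

end DtMultiples

/-- The algebra `P ⊕ dt · P`. -/
abbrev AdjoinDt : Type := TrivSqZeroExt P.A P.DtMultiples

namespace AdjoinDt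

/-- The element `a + dt · c` of `P ⊕ dt · P`. -/
def mk : (P.A × P.A) ≃ₗ[ℂ] P.AdjoinDt :=
  LinearEquiv.prodCongr (LinearEquiv.refl ℂ P.A) (DtMultiples.mk P)

/-- The coefficient `c` of `a + dt · c`. -/
def dtPart : P.AdjoinDt →ₗ[ℂ] P.A := LinearMap.snd ℂ P.A P.A ∘ₗ (mk P).symm.toLinearMap

variable {P}

@[simp] theorem fst_mk (u : P.A × P.A) : (mk P u).fst = u.1 := rfl

@[simp] theorem dtPart_mk (u : P.A × P.A) : dtPart P (mk P u) = u.2 := rfl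

@[ext] theorem ext {u v : P.AdjoinDt} (h : u.fst = v.fst) (h' : dtPart P u = dtPart P v) : u = v :=
  TrivSqZeroExt.ext h h'

@[simp] theorem dtPart_one : dtPart P 1 = 0 := rfl

@[simp] theorem dtPart_mul (u v : P.AdjoinDt) :
    dtPart P (u * v) = dtPart P u * v.fst + gradeInvolution P.grading u.fst * dtPart P v :=
  add_comm _ _

variable (P) in
/-- The grading of `P` shifted by one: `dt · c` has degree `p` for `c` in the `p`-th part. -/
def shiftedGrading : ℕ → Submodule ℂ P.A
  | 0 => ⊥
  | p + 1 => P.grading p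

theorem mul_mem_shiftedGrading {p q : ℕ} {c a : P.A} (hc : c ∈ shiftedGrading P p)
    (ha : a ∈ P.grading q) : c * a ∈ shiftedGrading P (p + q) := by
  cases p with
  | zero => simp [(Submodule.mem_bot ℂ).1 hc]
  | succ p =>
    rw [Nat.add_right_comm]
    exact SetLike.GradedMul.mul_mem (A := P.grading) hc ha

theorem mul_mem_shiftedGrading' {p q : ℕ} {a c : P.A} (ha : a ∈ P.grading p)
    (hc : c ∈ shiftedGrading P q) : a * c ∈ shiftedGrading P (p + q) := by
  cases q with
  | zero => simp [(Submodule.mem_bot ℂ).1 hc]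
  | succ q => exact SetLike.GradedMul.mul_mem (A := P.grading) ha hc

theorem mul_comm_of_mem_shiftedGrading {p q : ℕ} {c a : P.A} (hc : c ∈ shiftedGrading P p)
    (ha : a ∈ P.grading q) :
    c * a = (-1 : ℤ) ^ (p * q) • (gradeInvolution P.grading a * c) := by
  cases p with
  | zero => simp [(Submodule.mem_bot ℂ).1 hc]
  | succ p =>
    rw [P.gcomm p q c a hc ha, gradeInvolution_of_mem ha, smul_mul_assoc, smul_smul, ← pow_add]
    congr 1
    rw [add_mul, one_mul, add_assoc, pow_add _ _ (q + q), Even.neg_one_pow ⟨q, rfl⟩, mul_one]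

theorem gradeInvolution_of_mem_shiftedGrading {p : ℕ} {c : P.A} (hc : c ∈ shiftedGrading P p) :
    gradeInvolution P.grading c = -((-1 : ℤ) ^ p • c) := by
  cases p with
  | zero => simp [(Submodule.mem_bot ℂ).1 hc]
  | succ p => rw [gradeInvolution_of_mem (𝒜 := P.grading) hc, pow_succ]; simp

variable (P) in
/-- The elements `a + dt · c` of degree `p`. -/
def grading (p : ℕ) : Submodule ℂ P.AdjoinDt :=
  ((P.grading p).prod (shiftedGrading P p)).map (mk P).toLinearMap

theorem mem_grading {p : ℕ} {u : P.AdjoinDt} :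
    u ∈ grading P p ↔ u.fst ∈ P.grading p ∧ dtPart P u ∈ shiftedGrading P p := by
  obtain ⟨u, rfl⟩ := (mk P).surjective u
  simp [grading]

instance : SetLike.GradedMonoid (grading P) where
  one_mem := mem_grading.2 ⟨P.one_mem, zero_mem _⟩
  mul_mem p q u v hu hv := by
    rw [mem_grading] at *
    refine ⟨SetLike.GradedMul.mul_mem hu.1 hv.1, ?_⟩
    rw [dtPart_mul, gradeInvolution_of_mem hu.1, smul_mul_assoc]
    refine add_mem (mul_mem_shiftedGrading hu.2 hv.1) (zsmul_mem ?_ _)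
    exact mul_mem_shiftedGrading' hu.1 hv.2

theorem isInternal_shiftedGrading : DirectSum.IsInternal (shiftedGrading P) := by
  have hP := DirectSum.Decomposition.isInternal P.grading
  refine DirectSum.isInternal_submodule_of_iSupIndep_of_iSup_eq_top ?_ ?_
  · rintro (_ | p)
    · exact disjoint_bot_left
    · refine (hP.submodule_iSupIndep p).mono_right (iSup₂_le ?_)
      rintro (_ | q) hq
      · exact bot_le
      · exact le_iSup₂_of_le q (by simpa using hq) le_rfl
  · rw [eq_top_iff, ← hP.submodule_iSup_eq_top]
    exact iSup_le fun p => le_iSup (shiftedGrading P) (p + 1)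

theorem isInternal_grading : DirectSum.IsInternal (grading P) := by
  have h := isInternal_prod (DirectSum.Decomposition.isInternal P.grading)
    (isInternal_shiftedGrading (P := P))
  refine DirectSum.isInternal_submodule_of_iSupIndep_of_iSup_eq_top ?_ ?_
  · exact h.submodule_iSupIndep.map_orderIso (Submodule.orderIsoMapComap (mk P))
  · refine (Submodule.map_iSup _ _).symm.trans ?_
    rw [h.submodule_iSup_eq_top, Submodule.map_top, LinearEquiv.range]

noncomputable instance : GradedAlgebra (grading P) :=
  { isInternal_grading.chooseDecomposition with }

/-- The differential `d a + dt · (δ a - d c)` of `a + dt · c`. -/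
noncomputable def diff (δ : P.A →ₗ[ℂ] P.A) : P.AdjoinDt →ₗ[ℂ] P.AdjoinDt :=
  (mk P).toLinearMap ∘ₗ
    (P.d ∘ₗ (TrivSqZeroExt.fstHom ℂ P.A P.DtMultiples).toLinearMap).prod
      (δ ∘ₗ (TrivSqZeroExt.fstHom ℂ P.A P.DtMultiples).toLinearMap - P.d ∘ₗ dtPart P)

@[simp] theorem fst_diff (δ : P.A →ₗ[ℂ] P.A) (u : P.AdjoinDt) : (diff δ u).fst = P.d u.fst := rfl

@[simp] theorem dtPart_diff (δ : P.A →ₗ[ℂ] P.A) (u : P.AdjoinDt) :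
    dtPart P (diff δ u) = δ u.fst - P.d (dtPart P u) := rfl

theorem diff_mem_grading {δ : P.A →ₗ[ℂ] P.A} (hδ : P.IsDgaDerivation δ) {p : ℕ} {u : P.AdjoinDt}
    (hu : u ∈ grading P p) : diff δ u ∈ grading P (p + 1) := by
  rw [mem_grading] at *
  refine ⟨P.d_mem p _ hu.1, sub_mem (hδ.map_mem hu.1) ?_⟩
  cases p with
  | zero => simp [(Submodule.mem_bot ℂ).1 hu.2]
  | succ p => exact P.d_mem p _ hu.2

theorem diff_mul {δ : P.A →ₗ[ℂ] P.A} (hδ : P.IsDgaDerivation δ) {p : ℕ} {u : P.AdjoinDt}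
    (v : P.AdjoinDt) (hu : u ∈ grading P p) :
    diff δ (u * v) = diff δ u * v + (-1 : ℤ) ^ p • (u * diff δ v) := by
  rw [mem_grading] at hu
  ext
  · simp [-zsmul_eq_mul, P.leibniz p u.fst v.fst hu.1]
  · have h : dtPart P ((-1 : ℤ) ^ p • (u * diff δ v)) =
        (-1 : ℤ) ^ p • dtPart P u * P.d v.fst +
          u.fst * (δ v.fst - P.d (dtPart P v)) := by
      have hτ : (-1 : ℤ) ^ p • gradeInvolution P.grading u.fst = u.fst := by
        rw [gradeInvolution_of_mem hu.1, smul_smul, ← mul_pow]; simp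
      rw [map_zsmul, dtPart_mul, smul_add, ← smul_mul_assoc, ← smul_mul_assoc, hτ]; rfl
    simp only [dtPart_diff, dtPart_mul, TrivSqZeroExt.fst_mul, fst_diff, map_add, h,
      hδ.map_mul, P.d_mul, gradeInvolution_of_mem_shiftedGrading hu.2,
      gradeInvolution_gradeInvolution, P.gradeInvolution_d]
    noncomm_ring

end AdjoinDt

/-- The dga `P[dt]`, in which `dt` is closed of degree `1` and `δ` is the derivative in the
direction of `t`. -/
noncomputable def adjoinDt {δ : P.A →ₗ[ℂ] P.A} (hδ : P.IsDgaDerivation δ) : SimplexForms n where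
  A := P.AdjoinDt
  grading := AdjoinDt.grading P
  gcomm p q u v hu hv := by
    rw [AdjoinDt.mem_grading] at hu hv
    ext
    · simpa [-zsmul_eq_mul] using P.gcomm p q u.fst v.fst hu.1 hv.1
    · rw [map_zsmul, AdjoinDt.dtPart_mul, AdjoinDt.dtPart_mul, smul_add,
        AdjoinDt.mul_comm_of_mem_shiftedGrading hv.2 hu.1, smul_smul, mul_comm q p, ← mul_pow,
        AdjoinDt.mul_comm_of_mem_shiftedGrading hu.2 hv.1, add_comm]
      simp
  d := AdjoinDt.diff δ
  d_mem p u := AdjoinDt.diff_mem_grading hδ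
  d_sq u := by ext <;> simp [P.d_sq, hδ.map_d]
  leibniz p u v := AdjoinDt.diff_mul hδ v
  x i := TrivSqZeroExt.inl (P.x i)
  x_mem i := AdjoinDt.mem_grading.2 ⟨P.x_mem i, zero_mem _⟩
  sum_x := by rw [← TrivSqZeroExt.inl_sum, P.sum_x]; rfl
  sum_dx := by
    have hδ1 : δ 1 = 0 := by simpa using hδ.map_mul 1 1
    rw [← map_sum, ← TrivSqZeroExt.inl_sum, P.sum_x]
    ext <;> simp [P.d_one, hδ1]

variable {P} {m : ℕ} {Q : SimplexForms m} {f : P.A →ₐ[ℂ] Q.A}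

/-- The morphism `a + dt · c ↦ f a + dt · f c`. -/
noncomputable def AdjoinDt.map (hf : IsDgaHom P Q f) : P.AdjoinDt →ₐ[ℂ] Q.AdjoinDt :=
  AlgHom.ofLinearMap
    ((mk Q).toLinearMap ∘ₗ f.toLinearMap.prodMap f.toLinearMap ∘ₗ (mk P).symm.toLinearMap)
    (by ext; exacts [map_one f, map_zero f])
    (fun u v => by
      ext
      · exact map_mul f u.fst v.fst
      · rw [dtPart_mul]
        refine (congrArg f (dtPart_mul u v)).trans ?_
        rw [map_add, map_mul, map_mul, hf.map_gradeInvolution]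
        rfl)

theorem AdjoinDt.map_inl (hf : IsDgaHom P Q f) (a : P.A) :
    map hf (TrivSqZeroExt.inl a) = TrivSqZeroExt.inl (f a) :=
  AdjoinDt.ext rfl (map_zero f)

theorem AdjoinDt.isDgaHom_map (hf : IsDgaHom P Q f) {δ : P.A →ₗ[ℂ] P.A} {δ' : Q.A →ₗ[ℂ] Q.A}
    (hδ : P.IsDgaDerivation δ) (hδ' : Q.IsDgaDerivation δ') (h : ∀ a, f (δ a) = δ' (f a)) :
    IsDgaHom (P.adjoinDt hδ) (Q.adjoinDt hδ') (AdjoinDt.map hf) where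
  map_d u := by
    apply AdjoinDt.ext
    · exact hf.map_d u.fst
    · exact (map_sub f _ _).trans
        (congrArg₂ (· - ·) (h u.fst) (hf.map_d (AdjoinDt.dtPart P u)))
  map_mem {p u} hu := by
    refine AdjoinDt.mem_grading.2 ⟨hf.map_mem (AdjoinDt.mem_grading.1 hu).1, ?_⟩
    have hc := (AdjoinDt.mem_grading.1 hu).2
    cases p with
    | zero => exact (congrArg f ((Submodule.mem_bot ℂ).1 hc)).trans (map_zero f)
    | succ p => exact hf.map_mem hc

end AdjoinDt
end SimplexForms

namespace SimplexForms

section Cylinder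

variable {m n : ℕ} (P : SimplexForms m) (Q : SimplexForms n)

theorem rTensor_mem_polynomialGrading (φ : ℂ[X] →ₗ[ℂ] ℂ[X]) {p : ℕ} {u : ℂ[X] ⊗[ℂ] Q.A}
    (hu : u ∈ Q.polynomialGrading p) : φ.rTensor Q.A u ∈ Q.polynomialGrading p := by
  induction hu using polynomialGrading_induction with
  | zero => simp
  | tmul f a ha => exact tmul_mem_polynomialGrading _ ha
  | add u v _ _ hu hv => rw [map_add]; exact add_mem hu hv

theorem rTensor_derivative_mul (u v : ℂ[X] ⊗[ℂ] Q.A) :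
    derivative.rTensor Q.A (u * v) =
      derivative.rTensor Q.A u * v + u * derivative.rTensor Q.A v := by
  induction u with
  | zero => simp
  | add u u' hu hu' => simp only [add_mul, map_add, hu, hu']; abel
  | tmul f a =>
    induction v with
    | zero => simp
    | add v v' hv hv' => simp only [mul_add, map_add, hv, hv']; abel
    | tmul g b => simp [derivative_mul, TensorProduct.add_tmul]

theorem isDgaDerivation_derivative :
    Q.polynomialExtension.IsDgaDerivation (derivative.rTensor Q.A) where
  map_mem := rTensor_mem_polynomialGrading Q derivative
  map_mul := rTensor_derivative_mul Q
  map_d := LinearMap.congr_fun ((LinearMap.rTensor_comp_lTensor ..).trans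
    (LinearMap.lTensor_comp_rTensor ..).symm)

/-- The dga `ℂ[t, dt] ⊗ Q` of polynomial forms on the product of a simplex with the affine line. -/
noncomputable def cylinder : SimplexForms n :=
  Q.polynomialExtension.adjoinDt Q.isDgaDerivation_derivative

/-- The substitution `t = z`. -/
noncomputable def polynomialEval (z : ℂ) : ℂ[X] ⊗[ℂ] Q.A →ₐ[ℂ] Q.A :=
  (Algebra.TensorProduct.lid ℂ Q.A).toAlgHom.comp
    (Algebra.TensorProduct.map (aeval z) (AlgHom.id ℂ Q.A))

/-- The restriction of a form on the cylinder to the slice `t = z`. -/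
noncomputable def restrictSlice (z : ℂ) : Q.cylinder.A →ₐ[ℂ] Q.A :=
  (Q.polynomialEval z).comp
    (TrivSqZeroExt.fstHom ℂ Q.polynomialExtension.A Q.polynomialExtension.DtMultiples)

/-- The integral over `[0, 1]` of polynomials. -/
noncomputable def unitIntegral : ℂ[X] →ₗ[ℂ] ℂ :=
  Polynomial.lsum fun i => ((i : ℂ) + 1)⁻¹ • LinearMap.id

theorem unitIntegral_derivative (f : ℂ[X]) :
    unitIntegral (derivative f) = aeval 1 f - aeval 0 f := by
  induction f using Polynomial.induction_on' with
  | add f g hf hg => simp only [map_add, hf, hg]; ring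
  | monomial i c =>
    rcases i with _ | i
    · simp
    · have : (i : ℂ) + 1 ≠ 0 := by exact_mod_cast i.succ_ne_zero
      simp [unitIntegral, aeval_monomial, Polynomial.lsum_apply]
      field_simp

/-- Integration over `t ∈ [0, 1]`. -/
noncomputable def polynomialIntegral : ℂ[X] ⊗[ℂ] Q.A →ₗ[ℂ] Q.A :=
  (TensorProduct.lid ℂ Q.A).toLinearMap ∘ₗ unitIntegral.rTensor Q.A

/-- Integration of forms on the cylinder along `t ∈ [0, 1]`. -/
noncomputable def fiberIntegral : Q.cylinder.A →ₗ[ℂ] Q.A :=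
  Q.polynomialIntegral ∘ₗ AdjoinDt.dtPart Q.polynomialExtension

variable {P Q}

@[simp] theorem polynomialEval_tmul (z : ℂ) (f : ℂ[X]) (a : Q.A) :
    Q.polynomialEval z (f ⊗ₜ a) = aeval z f • a := by
  simp [polynomialEval]

@[simp] theorem polynomialIntegral_tmul (f : ℂ[X]) (a : Q.A) :
    Q.polynomialIntegral (f ⊗ₜ a) = unitIntegral f • a := by
  simp [polynomialIntegral]

theorem polynomialEval_lTensor (z : ℂ) (g : P.A →ₗ[ℂ] Q.A) (u : ℂ[X] ⊗[ℂ] P.A) :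
    Q.polynomialEval z (g.lTensor ℂ[X] u) = g (P.polynomialEval z u) := by
  induction u with
  | zero => simp
  | tmul f a => simp
  | add u v hu hv => simp only [map_add, hu, hv]

theorem polynomialIntegral_lTensor (g : P.A →ₗ[ℂ] Q.A) (u : ℂ[X] ⊗[ℂ] P.A) :
    Q.polynomialIntegral (g.lTensor ℂ[X] u) = g (P.polynomialIntegral u) := by
  induction u with
  | zero => simp
  | tmul f a => simp
  | add u v hu hv => simp only [map_add, hu, hv]

theorem polynomialIntegral_derivative (u : ℂ[X] ⊗[ℂ] Q.A) :
    Q.polynomialIntegral (derivative.rTensor Q.A u) =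
      Q.polynomialEval 1 u - Q.polynomialEval 0 u := by
  induction u with
  | zero => simp
  | tmul f a => simp [unitIntegral_derivative, sub_smul]
  | add u v hu hv => simp only [map_add, hu, hv]; abel

theorem polynomialEval_mem (z : ℂ) {p : ℕ} {u : ℂ[X] ⊗[ℂ] Q.A} (hu : u ∈ Q.polynomialGrading p) :
    Q.polynomialEval z u ∈ Q.grading p := by
  induction hu using polynomialGrading_induction with
  | zero => simp
  | tmul f a ha => simpa using Submodule.smul_mem _ _ ha
  | add u v _ _ hu hv => rw [map_add]; exact add_mem hu hv

theorem polynomialIntegral_mem {p : ℕ} {u : ℂ[X] ⊗[ℂ] Q.A} (hu : u ∈ Q.polynomialGrading p) :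
    Q.polynomialIntegral u ∈ Q.grading p := by
  induction hu using polynomialGrading_induction with
  | zero => simp
  | tmul f a ha => simpa using Submodule.smul_mem _ _ ha
  | add u v _ _ hu hv => rw [map_add]; exact add_mem hu hv

theorem isDgaHom_restrictSlice (z : ℂ) : IsDgaHom Q.cylinder Q (Q.restrictSlice z) where
  map_d w := polynomialEval_lTensor z Q.d w.fst
  map_mem hw := polynomialEval_mem z (AdjoinDt.mem_grading.1 hw).1

theorem fiberIntegral_mem {p : ℕ} {w : Q.cylinder.A} (hw : w ∈ Q.cylinder.grading (p + 1)) :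
    Q.fiberIntegral w ∈ Q.grading p :=
  polynomialIntegral_mem (AdjoinDt.mem_grading.1 hw).2

theorem fiberIntegral_eq_zero {w : Q.cylinder.A} (hw : w ∈ Q.cylinder.grading 0) :
    Q.fiberIntegral w = 0 := by
  have h : AdjoinDt.dtPart Q.polynomialExtension w = 0 :=
    (Submodule.mem_bot ℂ).1 (AdjoinDt.mem_grading.1 hw).2
  exact (congrArg (fun u : ℂ[X] ⊗[ℂ] Q.A => Q.polynomialIntegral u) h).trans (map_zero _)

theorem fiberIntegral_d (w : Q.cylinder.A) :
    Q.fiberIntegral (Q.cylinder.d w) + Q.d (Q.fiberIntegral w) =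
      Q.restrictSlice 1 w - Q.restrictSlice 0 w := by
  let u : ℂ[X] ⊗[ℂ] Q.A := w.fst
  let v : ℂ[X] ⊗[ℂ] Q.A := AdjoinDt.dtPart _ w
  change Q.polynomialIntegral (derivative.rTensor Q.A u - Q.d.lTensor ℂ[X] v) +
    Q.d (Q.polynomialIntegral v) = Q.polynomialEval 1 u - Q.polynomialEval 0 u
  rw [map_sub, polynomialIntegral_derivative, polynomialIntegral_lTensor, sub_add_cancel]

/-- The morphism `id ⊗ f`. -/
noncomputable def polynomialMap (f : P.A →ₐ[ℂ] Q.A) : ℂ[X] ⊗[ℂ] P.A →ₐ[ℂ] ℂ[X] ⊗[ℂ] Q.A :=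
  Algebra.TensorProduct.map (AlgHom.id ℂ ℂ[X]) f

theorem polynomialMap_lTensor_d {f : P.A →ₐ[ℂ] Q.A} (hf : IsDgaHom P Q f) (u : ℂ[X] ⊗[ℂ] P.A) :
    polynomialMap f (P.d.lTensor ℂ[X] u) = Q.d.lTensor ℂ[X] (polynomialMap f u) := by
  induction u with
  | zero => simp
  | tmul g a => simp [polynomialMap, hf.map_d]
  | add u v hu hv => simp only [map_add, hu, hv]

theorem polynomialMap_rTensor (φ : ℂ[X] →ₗ[ℂ] ℂ[X]) (f : P.A →ₐ[ℂ] Q.A) (u : ℂ[X] ⊗[ℂ] P.A) :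
    polynomialMap f (φ.rTensor P.A u) = φ.rTensor Q.A (polynomialMap f u) := by
  induction u with
  | zero => simp
  | tmul g a => simp [polynomialMap]
  | add u v hu hv => simp only [map_add, hu, hv]

theorem polynomialMap_mem {f : P.A →ₐ[ℂ] Q.A} (hf : IsDgaHom P Q f) {p : ℕ} {u : ℂ[X] ⊗[ℂ] P.A}
    (hu : u ∈ P.polynomialGrading p) : polynomialMap f u ∈ Q.polynomialGrading p := by
  induction hu using polynomialGrading_induction with
  | zero => simp
  | tmul g a ha => exact tmul_mem_polynomialGrading g (hf.map_mem ha)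
  | add u v _ _ hu hv => rw [map_add]; exact add_mem hu hv

theorem isDgaHom_polynomialMap {f : P.A →ₐ[ℂ] Q.A} (hf : IsDgaHom P Q f) :
    IsDgaHom P.polynomialExtension Q.polynomialExtension (polynomialMap f) where
  map_d := polynomialMap_lTensor_d hf
  map_mem := polynomialMap_mem hf

/-- The morphism of cylinders induced by a morphism of dgas. -/
noncomputable def cylinderMap {f : P.A →ₐ[ℂ] Q.A} (hf : IsDgaHom P Q f) :
    P.cylinder.A →ₐ[ℂ] Q.cylinder.A :=
  AdjoinDt.map (isDgaHom_polynomialMap hf)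

theorem isDgaHom_cylinderMap {f : P.A →ₐ[ℂ] Q.A} (hf : IsDgaHom P Q f) :
    IsDgaHom P.cylinder Q.cylinder (cylinderMap hf) :=
  AdjoinDt.isDgaHom_map _ _ _ (polynomialMap_rTensor derivative f)

theorem fiberIntegral_cylinderMap {f : P.A →ₐ[ℂ] Q.A} (hf : IsDgaHom P Q f) (w : P.cylinder.A) :
    Q.fiberIntegral (cylinderMap hf w) = f (P.fiberIntegral w) :=
  polynomialIntegral_lTensor f.toLinearMap (AdjoinDt.dtPart P.polynomialExtension w)

end Cylinder

end SimplexForms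

/-- `h` is a homotopy from `e` to the identity: `d h + h d = 1 - e`. -/
structure IsCochainHomotopy {n : ℕ} (Q : SimplexForms n) (h e : Q.A →ₗ[ℂ] Q.A) : Prop where
  eq_zero {a : Q.A} (ha : a ∈ Q.grading 0) : h a = 0
  map_mem {p : ℕ} {a : Q.A} (ha : a ∈ Q.grading (p + 1)) : h a ∈ Q.grading p
  d_add (a : Q.A) : h (Q.d a) + Q.d (h a) = a - e a

namespace IsPolyDeRham

section Cone

variable {m n : ℕ} {P : SimplexForms m} {Q : SimplexForms n}

/-- The coordinates `t x_j + (1 - t) δ_{kj}` of the contraction of the simplex to its vertex `k`. -/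
noncomputable def coneCoord (P : SimplexForms m) (k j : Fin (m + 1)) : ℂ[X] ⊗[ℂ] P.A :=
  (X : ℂ[X]) ⊗ₜ P.x j + (1 - X : ℂ[X]) ⊗ₜ (Pi.single k 1 : Fin (m + 1) → P.A) j

theorem coneCoord_mem (k j : Fin (m + 1)) : coneCoord P k j ∈ P.polynomialGrading 0 := by
  refine add_mem (SimplexForms.tmul_mem_polynomialGrading _ (P.x_mem j))
    (SimplexForms.tmul_mem_polynomialGrading _ ?_)
  rcases eq_or_ne j k with rfl | h
  · simpa using P.one_mem
  · simp [h]

theorem sum_coneCoord (k : Fin (m + 1)) : ∑ j, coneCoord P k j = 1 := by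
  simp [coneCoord, Finset.sum_add_distrib, ← TensorProduct.tmul_sum, P.sum_x,
    ← TensorProduct.add_tmul, Algebra.TensorProduct.one_def]

theorem polynomialEval_coneCoord (z : ℂ) (k j : Fin (m + 1)) :
    P.polynomialEval z (coneCoord P k j) =
      z • P.x j + (1 - z) • (Pi.single k 1 : Fin (m + 1) → P.A) j := by
  simp [coneCoord]

theorem sum_coneCoord_fiber {c : Fin (n + 1) → Fin (m + 1)} {f : P.A →ₐ[ℂ] Q.A}
    (hf : PullbackProp P Q c f) (k : Fin (n + 1)) (j : Fin (m + 1)) :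
    ∑ i with c i = j, coneCoord Q k i = SimplexForms.polynomialMap f (coneCoord P (c k) j) := by
  have hk : f ((Pi.single (c k) 1 : Fin (m + 1) → P.A) j) =
      ∑ i with c i = j, (Pi.single k 1 : Fin (n + 1) → Q.A) i := by
    rcases eq_or_ne (c k) j with rfl | h <;> simp [Finset.sum_pi_single', *]
  simp only [coneCoord, SimplexForms.polynomialMap, map_add, Algebra.TensorProduct.map_tmul,
    AlgHom.coe_id, id_eq, hf.map_x, hk, Finset.sum_add_distrib, TensorProduct.tmul_sum]

theorem exists_coneMap (hP : IsPolyDeRham P) (k : Fin (m + 1)) :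
    ∃ Φ : P.A →ₐ[ℂ] P.cylinder.A, IsDgaHom P P.cylinder Φ ∧
      ∀ j, Φ (P.x j) = TrivSqZeroExt.inl (coneCoord P k j) :=
  hP.exists_hom P.cylinder _
    (fun j => SimplexForms.AdjoinDt.mem_grading.2 ⟨coneCoord_mem k j, zero_mem _⟩)
    ((TrivSqZeroExt.inl_sum ..).symm.trans (congrArg _ (sum_coneCoord k)))

/-- The homotopy contracting the simplex to its vertex `k`. -/
noncomputable def coneHomotopy (hP : IsPolyDeRham P) (k : Fin (m + 1)) : P.A →ₗ[ℂ] P.A :=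
  P.fiberIntegral ∘ₗ (hP.exists_coneMap k).choose.toLinearMap

theorem isCochainHomotopy_coneHomotopy (hP : IsPolyDeRham P) {k : Fin (m + 1)}
    {ε : P.A →ₐ[ℂ] P.A} (hε : PullbackProp P P (fun _ => k) ε) :
    IsCochainHomotopy P (hP.coneHomotopy k) ε.toLinearMap := by
  obtain ⟨hΦ, hx⟩ := (hP.exists_coneMap k).choose_spec
  set Φ := (hP.exists_coneMap k).choose
  have eval_one : (P.restrictSlice 1).comp Φ = AlgHom.id ℂ P.A := by
    refine hP.hom_ext ((SimplexForms.isDgaHom_restrictSlice 1).comp hΦ) (IsDgaHom.id P) fun j => ?_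
    rw [AlgHom.comp_apply, hx]
    exact (polynomialEval_coneCoord 1 k j).trans (by simp)
  have eval_zero : (P.restrictSlice 0).comp Φ = ε := by
    refine hP.hom_ext ((SimplexForms.isDgaHom_restrictSlice 0).comp hΦ) hε.isDgaHom fun j => ?_
    rw [AlgHom.comp_apply, hx, hε.map_x]
    exact (polynomialEval_coneCoord 0 k j).trans
      (by rcases eq_or_ne k j with rfl | h <;> simp [P.sum_x, *])
  refine ⟨fun ha => SimplexForms.fiberIntegral_eq_zero (hΦ.map_mem ha),
    fun ha => SimplexForms.fiberIntegral_mem (hΦ.map_mem ha), fun a => ?_⟩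
  calc P.fiberIntegral (Φ (P.d a)) + P.d (P.fiberIntegral (Φ a))
      = P.restrictSlice 1 (Φ a) - P.restrictSlice 0 (Φ a) := by
        rw [hΦ.map_d, SimplexForms.fiberIntegral_d]
    _ = a - ε a :=
      congrArg₂ (· - ·) (DFunLike.congr_fun eval_one a) (DFunLike.congr_fun eval_zero a)

theorem coneHomotopy_pullback (hP : IsPolyDeRham P) (hQ : IsPolyDeRham Q)
    {c : Fin (n + 1) → Fin (m + 1)} {f : P.A →ₐ[ℂ] Q.A} (hf : PullbackProp P Q c f)
    (k : Fin (n + 1)) (a : P.A) : hQ.coneHomotopy k (f a) = f (hP.coneHomotopy (c k) a) := by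
  obtain ⟨hΦ, hx⟩ := (hP.exists_coneMap (c k)).choose_spec
  obtain ⟨hΨ, hy⟩ := (hQ.exists_coneMap k).choose_spec
  have h : (hQ.exists_coneMap k).choose.comp f =
      (SimplexForms.cylinderMap hf.isDgaHom).comp (hP.exists_coneMap (c k)).choose := by
    refine hP.hom_ext (hΨ.comp hf.isDgaHom)
      ((SimplexForms.isDgaHom_cylinderMap hf.isDgaHom).comp hΦ) fun j => ?_
    rw [AlgHom.comp_apply, AlgHom.comp_apply, hx, hf.map_x, map_sum, Finset.sum_congr rfl
      fun i _ => hy i]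
    exact ((TrivSqZeroExt.inl_sum ..).symm.trans
      (congrArg _ (sum_coneCoord_fiber hf k j))).trans
      (SimplexForms.AdjoinDt.map_inl (SimplexForms.isDgaHom_polynomialMap hf.isDgaHom) _).symm
  exact (congrArg Q.fiberIntegral (DFunLike.congr_fun h a)).trans
    (SimplexForms.fiberIntegral_cylinderMap hf.isDgaHom _)

end Cone

end IsPolyDeRham

/-! ### Extension of horns -/

section HornFamily

variable {n : ℕ} {M' M'' : Type*}

/-- The compatibility condition of `HornCompat`, for arbitrary face maps `bd`. -/
def IsHornFamily (bd : Fin (n + 2) → M' → M'') (k : Fin (n + 3))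
    (t : ∀ i : Fin (n + 3), i ≠ k → M') : Prop :=
  ∀ (i j : Fin (n + 3)) (hi : i ≠ k) (hj : j ≠ k) (hij : i.1 < j.1),
    bd ⟨i.1, by have := j.isLt; omega⟩ (t j hj) = bd ⟨j.1 - 1, by have := j.isLt; omega⟩ (t i hi)

theorem IsHornFamily.eq_succAbove {bd : Fin (n + 2) → M' → M''} {k : Fin (n + 3)}
    {t : ∀ i : Fin (n + 3), i ≠ k → M'} (ht : IsHornFamily bd k t)
    {i : Fin (n + 3)} {j : Fin (n + 2)} (hi : i ≠ k) (hj : i.succAbove j ≠ k) :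
    bd j (t i hi) = bd (j.predAbove i) (t (i.succAbove j) hj) := by
  rcases lt_or_ge j.castSucc i with h | h
  · simp only [Fin.succAbove_of_castSucc_lt _ _ h, Fin.predAbove_of_castSucc_lt _ _ h] at hj ⊢
    exact ht _ _ hj hi h
  · simp only [Fin.succAbove_of_le_castSucc _ _ h, Fin.predAbove_of_le_castSucc _ _ h] at hj ⊢
    exact (ht _ _ hi hj (Nat.lt_succ_of_le h)).symm

end HornFamily

section HornSection

variable {R M M' M'' : Type*} [CommRing R] [AddCommGroup M] [Module R M] [AddCommGroup M']
  [Module R M'] [AddCommGroup M''] [Module R M''] {n : ℕ}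

/-- `σ` is a system of sections of the restrictions `res i` to the facets `i ≠ k`; on another facet
of the horn, `σ i u` depends only on the restriction of `u` to the common face. -/
structure IsHornSection (res : Fin (n + 3) → M →ₗ[R] M') (bd : Fin (n + 2) → M' →ₗ[R] M'')
    (k : Fin (n + 3)) (σ : Fin (n + 3) → M' →ₗ[R] M) : Prop where
  face (i : Fin (n + 3)) (j : Fin (n + 2)) :
    bd j ∘ₗ res i = bd (j.predAbove i) ∘ₗ res (i.succAbove j)
  res_self {i : Fin (n + 3)} (hi : i ≠ k) : res i ∘ₗ σ i = LinearMap.id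
  res_succAbove {i : Fin (n + 3)} {j : Fin (n + 2)} (hi : i ≠ k) (hj : i.succAbove j ≠ k) :
    ∃ θ : M'' →ₗ[R] M', res (i.succAbove j) ∘ₗ σ i = θ ∘ₗ bd j

namespace IsHornSection

variable {res : Fin (n + 3) → M →ₗ[R] M'} {bd : Fin (n + 2) → M' →ₗ[R] M''} {k : Fin (n + 3)}
  {σ : Fin (n + 3) → M' →ₗ[R] M}

theorem lTensor (h : IsHornSection res bd k σ) (V : Type*) [AddCommGroup V] [Module R V] :
    IsHornSection (fun i => (res i).lTensor V) (fun i => (bd i).lTensor V) k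
      (fun i => (σ i).lTensor V) where
  face i j := by simp only [← LinearMap.lTensor_comp, h.face i j]
  res_self hi := by rw [← LinearMap.lTensor_comp, h.res_self hi, LinearMap.lTensor_id]
  res_succAbove hi hj :=
    have ⟨θ, hθ⟩ := h.res_succAbove hi hj
    ⟨θ.lTensor V, by simp only [← LinearMap.lTensor_comp, hθ]⟩

/-- Starting from `w₀`, the facets are corrected one at a time by `w ↦ w + σ_i (t_i - res_i w)`. -/
theorem exists_filler (h : IsHornSection res bd k σ) {S : Submodule R M} {S' : Submodule R M'}
    (hres : ∀ i, ∀ w ∈ S, res i w ∈ S') (hσ : ∀ i, ∀ u ∈ S', σ i u ∈ S)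
    {t : ∀ i : Fin (n + 3), i ≠ k → M'} (ht : IsHornFamily (fun i => bd i) k t) (w₀ : M)
    (htS : ∀ i hi, t i hi - res i w₀ ∈ S') : ∃ w, w - w₀ ∈ S ∧ ∀ i hi, res i w = t i hi := by
  suffices H : ∀ s : Finset (Fin (n + 3)), ∃ w, w - w₀ ∈ S ∧ ∀ i ∈ s, ∀ hi, res i w = t i hi from
    have ⟨w, hw, hwt⟩ := H Finset.univ
    ⟨w, hw, fun i => hwt i (Finset.mem_univ i)⟩
  intro s
  induction s using Finset.induction_on with
  | empty => exact ⟨w₀, by simp, by simp⟩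
  | insert i s _ ih =>
    obtain ⟨w, hw, hwt⟩ := ih
    by_cases hi : i = k
    · exact ⟨w, hw, fun i' hi's hi' =>
        hwt i' (Finset.mem_of_mem_insert_of_ne hi's fun h => hi' (h.trans hi)) hi'⟩
    have hS' : t i hi - res i w ∈ S' := by
      simpa using sub_mem (htS i hi) (hres i _ hw)
    refine ⟨w + σ i (t i hi - res i w), ?_, fun i' hi's hi' => ?_⟩
    · simpa [add_sub_right_comm] using add_mem hw (hσ i _ hS')
    rcases eq_or_ne i' i with rfl | hne
    · have : res i' (σ i' (t i' hi - res i' w)) = t i' hi - res i' w :=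
        LinearMap.congr_fun (h.res_self hi) _
      rw [map_add, this, add_sub_cancel]
    replace hi's := Finset.mem_of_mem_insert_of_ne hi's hne
    obtain ⟨j, rfl⟩ := Fin.exists_succAbove_eq hne
    obtain ⟨θ, hθ⟩ := h.res_succAbove hi hi'
    have common_face : bd j (t i hi - res i w) = 0 := by
      rw [map_sub, ht.eq_succAbove hi hi', ← hwt _ hi's hi', sub_eq_zero]
      exact (LinearMap.congr_fun (h.face i j) w).symm
    have : res (i.succAbove j) (σ i (t i hi - res i w)) = 0 := by
      rw [← LinearMap.comp_apply, hθ, LinearMap.comp_apply, common_face, map_zero]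
    rw [map_add, this, add_zero, hwt _ hi's hi']

end IsHornSection

end HornSection

/-- `h` contracts the simplex to a point of the horn `Λ^k`, the value at which is `e`, in such a way
that it restricts to every facet `i ≠ k`. -/
structure IsHornContraction {n : ℕ} (Q : SimplexForms (n + 2)) {M' : Type*} [AddCommGroup M']
    [Module ℂ M'] (res : Fin (n + 3) → Q.A →ₗ[ℂ] M') (k : Fin (n + 3)) (h e : Q.A →ₗ[ℂ] Q.A) : Prop
    extends IsCochainHomotopy Q h e where
  point_factors {i : Fin (n + 3)} (hi : i ≠ k) : ∃ θ : M' →ₗ[ℂ] Q.A, e = θ ∘ₗ res i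
  restricts {i : Fin (n + 3)} (hi : i ≠ k) : ∃ ρ : M' →ₗ[ℂ] M', res i ∘ₗ h = ρ ∘ₗ res i

/-- `F` is the family of polynomial de Rham algebras of the simplices, with face maps `pb`. -/
structure IsPolyDeRhamFaces (F : ∀ k, SimplexForms k)
    (pb : ∀ k : ℕ, Fin (k + 2) → (F (k + 1)).A →ₐ[ℂ] (F k).A) : Prop where
  isPolyDeRham (m : ℕ) : IsPolyDeRham (F m)
  pullback (m : ℕ) (i : Fin (m + 2)) : PullbackProp (F (m + 1)) (F m) i.succAbove (pb m i)

namespace IsPolyDeRhamFaces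

variable {F : ∀ k, SimplexForms k}
  {pb : ∀ k : ℕ, Fin (k + 2) → (F (k + 1)).A →ₐ[ℂ] (F k).A}

theorem exists_factor (h : IsPolyDeRhamFaces F pb) {m l : ℕ} {Q : SimplexForms l}
    {c : Fin (l + 1) → Fin (m + 2)} {f : (F (m + 1)).A →ₐ[ℂ] Q.A}
    (hf : PullbackProp (F (m + 1)) Q c f) {i : Fin (m + 2)} (hc : ∀ x, c x ≠ i) :
    ∃ θ : (F m).A →ₐ[ℂ] Q.A, f = θ.comp (pb m i) := by
  choose c' hc' using fun x => Fin.exists_succAbove_eq (hc x)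
  obtain ⟨θ, hθ⟩ := (h.isPolyDeRham m).exists_pullback Q c'
  refine ⟨θ, PullbackProp.unique (h.isPolyDeRham _) hf ?_⟩
  simpa [Function.comp_def, hc'] using hθ.comp (h.pullback m i)

theorem face_face (h : IsPolyDeRhamFaces F pb) (n : ℕ) (i : Fin (n + 3)) (j : Fin (n + 2)) :
    (pb n j).comp (pb (n + 1) i) = (pb n (j.predAbove i)).comp (pb (n + 1) (i.succAbove j)) := by
  refine PullbackProp.unique (h.isPolyDeRham _) ((h.pullback n j).comp (h.pullback (n + 1) i)) ?_
  convert (h.pullback n (j.predAbove i)).comp (h.pullback (n + 1) (i.succAbove j)) using 1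
  ext x : 1
  exact (Fin.succAbove_succAbove_succAbove_predAbove i j x).symm

theorem exists_section (h : IsPolyDeRhamFaces F pb) (n : ℕ) (i : Fin (n + 3)) (k : Fin (n + 2)) :
    ∃ σ : (F (n + 1)).A →ₐ[ℂ] (F (n + 2)).A, IsDgaHom (F (n + 1)) (F (n + 2)) σ ∧
      (pb (n + 1) i).comp σ = AlgHom.id ℂ _ ∧
      ∀ j ≠ k, ∃ θ : (F n).A →ₐ[ℂ] (F (n + 1)).A,
        (pb (n + 1) (i.succAbove j)).comp σ = θ.comp (pb n j) := by
  let c : Fin (n + 3) → Fin (n + 2) := i.insertNth (α := fun _ => Fin (n + 2)) k id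
  have hc (x : Fin (n + 2)) : c (i.succAbove x) = x := Fin.insertNth_apply_succAbove ..
  have hci : c i = k := Fin.insertNth_apply_same ..
  obtain ⟨σ, hσ⟩ := (h.isPolyDeRham (n + 1)).exists_pullback (F (n + 2)) c
  refine ⟨σ, hσ.isDgaHom, PullbackProp.unique (h.isPolyDeRham _) ((h.pullback _ i).comp hσ) ?_,
    fun j hj => h.exists_factor ((h.pullback _ (i.succAbove j)).comp hσ) fun x => ?_⟩
  · exact (show c ∘ i.succAbove = id from funext hc) ▸ PullbackProp.id (F (n + 1))
  · have hx := Fin.succAbove_ne (i.succAbove j) x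
    rcases Fin.eq_self_or_eq_succAbove i ((i.succAbove j).succAbove x) with hi | ⟨y, hy⟩
    · simpa [hi, hci] using hj.symm
    · rw [Function.comp_apply, hy, hc]
      rintro rfl
      exact hx hy

theorem exists_isHornSection (h : IsPolyDeRhamFaces F pb) (n : ℕ) (k : Fin (n + 3)) :
    ∃ σ : Fin (n + 3) → (F (n + 1)).A →ₐ[ℂ] (F (n + 2)).A,
      (∀ i, IsDgaHom (F (n + 1)) (F (n + 2)) (σ i)) ∧
      IsHornSection (fun i => (pb (n + 1) i).toLinearMap) (fun i => (pb n i).toLinearMap) k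
        (fun i => (σ i).toLinearMap) := by
  have vertex (i : Fin (n + 3)) : ∃ k' : Fin (n + 2), i ≠ k → i.succAbove k' = k := by
    by_cases hi : i = k
    · exact ⟨0, fun h => (h hi).elim⟩
    · exact (Fin.exists_succAbove_eq (Ne.symm hi)).imp fun _ h _ => h
  choose k' hk' using vertex
  choose σ hσ hres hfac using fun i => h.exists_section n i (k' i)
  refine ⟨σ, hσ, fun i j => congrArg AlgHom.toLinearMap (h.face_face n i j),
    fun {i} _ => congrArg AlgHom.toLinearMap (hres i), fun {i j} hi hj => ?_⟩
  obtain ⟨θ, hθ⟩ := hfac i j fun h => hj (h ▸ hk' i hi)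
  exact ⟨θ.toLinearMap, congrArg AlgHom.toLinearMap hθ⟩

theorem exists_isHornContraction (h : IsPolyDeRhamFaces F pb) (n : ℕ) (k : Fin (n + 3)) :
    ∃ η e, IsHornContraction (F (n + 2)) (fun i => (pb (n + 1) i).toLinearMap) k η e := by
  obtain ⟨ε, hε⟩ := (h.isPolyDeRham (n + 2)).exists_pullback (F (n + 2)) fun _ => k
  refine ⟨_, _, (h.isPolyDeRham _).isCochainHomotopy_coneHomotopy hε, fun hi => ?_,
    fun {i} hi => ?_⟩
  · obtain ⟨θ, rfl⟩ := h.exists_factor hε fun _ => hi.symm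
    exact ⟨θ.toLinearMap, rfl⟩
  · obtain ⟨k, rfl⟩ := Fin.exists_succAbove_eq hi.symm
    exact ⟨(h.isPolyDeRham _).coneHomotopy k, LinearMap.ext fun a =>
      ((h.isPolyDeRham _).coneHomotopy_pullback (h.isPolyDeRham _) (h.pullback _ _) k a).symm⟩

end IsPolyDeRhamFaces

/-! ### Cohomology of horns -/

namespace IsHornContraction

variable {n : ℕ} {Q : SimplexForms (n + 2)} {M' : Type*} [AddCommGroup M'] [Module ℂ M']
  {res : Fin (n + 3) → Q.A →ₗ[ℂ] M'} {k : Fin (n + 3)} {h e : Q.A →ₗ[ℂ] Q.A}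

theorem apply_eq_zero (hc : IsHornContraction Q res k h e) {i : Fin (n + 3)} (hi : i ≠ k) {a : Q.A}
    (ha : res i a = 0) : res i (h a) = 0 := by
  obtain ⟨ρ, hρ⟩ := hc.restricts hi
  rw [← LinearMap.comp_apply, hρ, LinearMap.comp_apply, ha, map_zero]

theorem point_eq_zero (hc : IsHornContraction Q res k h e) {a : Q.A} (ha : ∀ i ≠ k, res i a = 0) :
    e a = 0 := by
  obtain ⟨i, hi⟩ := exists_ne k
  obtain ⟨θ, rfl⟩ := hc.point_factors hi
  rw [LinearMap.comp_apply, ha i hi, map_zero]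

theorem d_apply (hc : IsHornContraction Q res k h e) {a : Q.A} (hda : Q.d a = 0)
    (ha : ∀ i ≠ k, res i a = 0) : Q.d (h a) = a := by
  simpa [hda, hc.point_eq_zero ha] using hc.d_add a

end IsHornContraction

/-- Elementwise form of the assertion that restriction `A^*(Δ_{n+2}) → A^*(Λ^k_{n+2})` is a
quasi-isomorphism. Degree `0`, where there are no coboundaries, is separate because the grading is
indexed by `ℕ`. -/
def IsHornQuasiIso (F : ∀ k, SimplexForms k)
    (pb : ∀ k : ℕ, Fin (k + 2) → (F (k + 1)).A →ₐ[ℂ] (F k).A) (n : ℕ) (k : Fin (n + 3)) : Prop :=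
  (∀ (q : ℕ) (t : ∀ i : Fin (n + 3), i ≠ k → (F (n + 1)).A),
    HornCompat F pb n k t →
    (∀ i hi, t i hi ∈ (F (n + 1)).grading (q + 1)) →
    (∀ i hi, (F (n + 1)).d (t i hi) = 0) →
    ∃ β ∈ (F (n + 2)).grading (q + 1), (F (n + 2)).d β = 0 ∧
      ∃ s : ∀ i : Fin (n + 3), i ≠ k → (F (n + 1)).A,
        HornCompat F pb n k s ∧
        (∀ i hi, s i hi ∈ (F (n + 1)).grading q) ∧
        ∀ i hi, (F (n + 1)).d (s i hi) = pb (n + 1) i β - t i hi) ∧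
  (∀ t : ∀ i : Fin (n + 3), i ≠ k → (F (n + 1)).A,
    HornCompat F pb n k t →
    (∀ i hi, t i hi ∈ (F (n + 1)).grading 0) →
    (∀ i hi, (F (n + 1)).d (t i hi) = 0) →
    ∃ β ∈ (F (n + 2)).grading 0, (F (n + 2)).d β = 0 ∧ ∀ i hi, pb (n + 1) i β = t i hi) ∧
  (∀ (q : ℕ), ∀ β ∈ (F (n + 2)).grading (q + 1), (F (n + 2)).d β = 0 →
    (∃ s : ∀ i : Fin (n + 3), i ≠ k → (F (n + 1)).A,
      HornCompat F pb n k s ∧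
      (∀ i hi, s i hi ∈ (F (n + 1)).grading q) ∧
      ∀ i hi, (F (n + 1)).d (s i hi) = pb (n + 1) i β) →
    ∃ b ∈ (F (n + 2)).grading q, (F (n + 2)).d b = β) ∧
  ∀ β ∈ (F (n + 2)).grading 0, (F (n + 2)).d β = 0 →
    (∀ i ≠ k, pb (n + 1) i β = 0) → β = 0

namespace IsPolyDeRhamFaces

variable {F : ∀ k, SimplexForms k} {pb : ∀ k : ℕ, Fin (k + 2) → (F (k + 1)).A →ₐ[ℂ] (F k).A}

theorem isDgaHom (h : IsPolyDeRhamFaces F pb) (m : ℕ) (i : Fin (m + 2)) :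
    IsDgaHom (F (m + 1)) (F m) (pb m i) :=
  (h.pullback m i).isDgaHom

theorem exists_extension (h : IsPolyDeRhamFaces F pb) {n : ℕ} {k : Fin (n + 3)} {q : ℕ}
    {t : ∀ i : Fin (n + 3), i ≠ k → (F (n + 1)).A} (ht : HornCompat F pb n k t)
    (hq : ∀ i hi, t i hi ∈ (F (n + 1)).grading q) :
    ∃ β ∈ (F (n + 2)).grading q, ∀ i hi, pb (n + 1) i β = t i hi := by
  obtain ⟨σ, hσ, hsec⟩ := h.exists_isHornSection n k
  simpa using hsec.exists_filler (fun i _ => (h.isDgaHom _ i).map_mem)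
    (fun i _ => (hσ i).map_mem) ht 0 (by simpa using hq)

theorem exists_closed_extension (h : IsPolyDeRhamFaces F pb) {n : ℕ} {k : Fin (n + 3)} {q : ℕ}
    {t : ∀ i : Fin (n + 3), i ≠ k → (F (n + 1)).A} (ht : HornCompat F pb n k t)
    (hq : ∀ i hi, t i hi ∈ (F (n + 1)).grading q) (hd : ∀ i hi, (F (n + 1)).d (t i hi) = 0) :
    ∃ β ∈ (F (n + 2)).grading q, (F (n + 2)).d β = 0 ∧ ∀ i hi, pb (n + 1) i β = t i hi := by
  obtain ⟨w, hw, hwt⟩ := h.exists_extension ht hq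
  obtain ⟨η, e, hη⟩ := h.exists_isHornContraction n k
  have hdw : ∀ i ≠ k, pb (n + 1) i ((F (n + 2)).d w) = 0 := fun i hi => by
    rw [(h.isDgaHom _ i).map_d, hwt i hi, hd i hi]
  refine ⟨w - η ((F (n + 2)).d w), sub_mem hw (hη.map_mem ((F (n + 2)).d_mem _ _ hw)), ?_,
    fun i hi => ?_⟩
  · rw [map_sub, hη.d_apply ((F (n + 2)).d_sq w) hdw, sub_self]
  · have : pb (n + 1) i (η ((F (n + 2)).d w)) = 0 := hη.apply_eq_zero hi (hdw i hi)
    rw [map_sub, this, sub_zero, hwt i hi]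

theorem exists_primitive (h : IsPolyDeRhamFaces F pb) {n : ℕ} {k : Fin (n + 3)} {q : ℕ}
    {s : ∀ i : Fin (n + 3), i ≠ k → (F (n + 1)).A} (hs : HornCompat F pb n k s)
    (hq : ∀ i hi, s i hi ∈ (F (n + 1)).grading q) {β : (F (n + 2)).A}
    (hβ : β ∈ (F (n + 2)).grading (q + 1)) (hdβ : (F (n + 2)).d β = 0)
    (hds : ∀ i hi, (F (n + 1)).d (s i hi) = pb (n + 1) i β) :
    ∃ b ∈ (F (n + 2)).grading q, (F (n + 2)).d b = β := by
  obtain ⟨w, hw, hws⟩ := h.exists_extension hs hq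
  obtain ⟨η, e, hη⟩ := h.exists_isHornContraction n k
  have hres : ∀ i ≠ k, pb (n + 1) i (β - (F (n + 2)).d w) = 0 := fun i hi => by
    rw [map_sub, (h.isDgaHom _ i).map_d, hws i hi, hds i hi, sub_self]
  have hclosed : (F (n + 2)).d (β - (F (n + 2)).d w) = 0 := by
    rw [map_sub, hdβ, (F (n + 2)).d_sq, sub_self]
  exact ⟨w + η (β - (F (n + 2)).d w),
    add_mem hw (hη.map_mem (sub_mem hβ ((F (n + 2)).d_mem _ _ hw))),
    by rw [map_add, hη.d_apply hclosed hres, add_sub_cancel]⟩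

theorem isHornQuasiIso (h : IsPolyDeRhamFaces F pb) (n : ℕ) (k : Fin (n + 3)) :
    IsHornQuasiIso F pb n k := by
  refine ⟨fun q t ht hq hd => ?_, fun t => h.exists_closed_extension,
    fun q β hβ hdβ ⟨s, hs, hq, hds⟩ => h.exists_primitive hs hq hβ hdβ hds,
    fun β hβ hdβ hres => ?_⟩
  · obtain ⟨β, hβ, hdβ, hβt⟩ := h.exists_closed_extension ht hq hd
    exact ⟨β, hβ, hdβ, fun _ _ => 0, fun _ _ _ _ _ => by simp, fun _ _ => zero_mem _,
      fun i hi => by simp [hβt i hi]⟩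
  · obtain ⟨η, e, hη⟩ := h.exists_isHornContraction n k
    rw [← hη.d_apply hdβ hres, hη.eq_zero hβ, map_zero]

end IsPolyDeRhamFaces

/-! ### Curvature -/

theorem sgn_add (p q : ℤ) : sgn (p + q) = sgn p * sgn q := by
  simp [sgn, zpow_add]

theorem sgn_natCast (q : ℕ) : sgn q = (-1) ^ q := by
  simp [sgn]

theorem sgn_sq (p : ℤ) : (sgn p : ℂ) ^ 2 = 1 := by
  exact_mod_cast Int.isUnit_sq (Units.isUnit _)

/-- `D` and `Br` make the `N p` into a dgLa. These are the axioms of `GradedDGLA`, but only for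
homogeneous elements, as the `N p` need not span `V`. -/
structure IsDGLA {V : Type*} [AddCommGroup V] [Module ℂ V] (N : ℤ → Submodule ℂ V) (D : V →ₗ[ℂ] V)
    (Br : V →ₗ[ℂ] V →ₗ[ℂ] V) : Prop where
  d_mem {p : ℤ} {u : V} (hu : u ∈ N p) : D u ∈ N (p + 1)
  br_mem {p q : ℤ} {u v : V} (hu : u ∈ N p) (hv : v ∈ N q) : Br u v ∈ N (p + q)
  d_d {p : ℤ} {u : V} (hu : u ∈ N p) : D (D u) = 0
  leib {p q : ℤ} {u v : V} (hu : u ∈ N p) (hv : v ∈ N q) :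
    D (Br u v) = Br (D u) v + (sgn p : ℂ) • Br u (D v)
  skew {p q : ℤ} {u v : V} (hu : u ∈ N p) (hv : v ∈ N q) : Br u v = -((sgn (p * q) : ℂ) • Br v u)
  jacobi {p q r : ℤ} {u v w : V} (hu : u ∈ N p) (hv : v ∈ N q) (hw : w ∈ N r) :
    Br u (Br v w) = Br (Br u v) w + (sgn (p * q) : ℂ) • Br v (Br u w)

section Curvature

variable {V : Type*} [AddCommGroup V] [Module ℂ V] {N : ℤ → Submodule ℂ V} {D : V →ₗ[ℂ] V}
  {Br : V →ₗ[ℂ] V →ₗ[ℂ] V} {φ η : V}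

/-- The left hand side of the Maurer–Cartan equation. -/
noncomputable def curvature (D : V →ₗ[ℂ] V) (Br : V →ₗ[ℂ] V →ₗ[ℂ] V) (φ : V) : V :=
  D φ + (1 / 2 : ℂ) • Br φ φ

theorem curvature_sub (h₁ : Br φ η = 0) (h₂ : Br η φ = 0) (h₃ : Br η η = 0) :
    curvature D Br (φ - η) = curvature D Br φ - D η := by
  simp only [curvature, map_sub, LinearMap.sub_apply, h₁, h₂, h₃]
  module

namespace IsDGLA

theorem d_br_self (h : IsDGLA N D Br) (hφ : φ ∈ N 1) : D (Br φ φ) = (2 : ℂ) • Br (D φ) φ := by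
  simp only [h.leib hφ hφ, h.skew hφ (h.d_mem hφ), show sgn 1 = -1 by decide,
    show sgn (1 * (1 + 1)) = 1 by decide]
  module

theorem br_br_self (h : IsDGLA N D Br) (hφ : φ ∈ N 1) : Br (Br φ φ) φ = 0 := by
  have hjac := h.jacobi hφ hφ hφ
  rw [h.skew hφ (h.br_mem hφ hφ), show sgn (1 * 1) = -1 by decide,
    show sgn (1 * (1 + 1)) = 1 by decide] at hjac
  refine (smul_eq_zero.mp (?_ : (3 : ℂ) • Br (Br φ φ) φ = 0)).resolve_left three_ne_zero
  linear_combination (norm := module) -hjac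

theorem d_curvature (h : IsDGLA N D Br) (hφ : φ ∈ N 1) :
    D (curvature D Br φ) = Br (curvature D Br φ) φ := by
  simp [curvature, h.d_d hφ, h.d_br_self hφ, h.br_br_self hφ]

end IsDGLA

end Curvature

/-! ### Tensor products of a dgLa with forms -/

/-- The part of total degree `r` of `L ⊗ m ⊗ Ω`; `Deg1m` is the case `r = 1`. -/
noncomputable def totalDegree {l : ℕ} (Ω : SimplexForms l) (L : GradedDGLA) {A : Type*} [CommRing A]
    [Algebra ℂ A] (m : Submodule ℂ A) (r : ℤ) : Submodule ℂ ((L.L ⊗[ℂ] A) ⊗[ℂ] Ω.A) :=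
  ⨆ q : ℕ, LinearMap.range
    (TensorProduct.map (TensorProduct.map (L.gr (r - (q : ℤ))).subtype m.subtype)
      (Ω.grading q).subtype)

/-- `D` and `Br` are the differential and the bracket of `L ⊗ A ⊗ Ω`, with signs according to the
Koszul rule. -/
structure IsTensorDGLA {l : ℕ} (Ω : SimplexForms l) (L : GradedDGLA) {A : Type*} [CommRing A]
    [Algebra ℂ A] (D : (L.L ⊗[ℂ] A) ⊗[ℂ] Ω.A →ₗ[ℂ] (L.L ⊗[ℂ] A) ⊗[ℂ] Ω.A)
    (Br : (L.L ⊗[ℂ] A) ⊗[ℂ] Ω.A →ₗ[ℂ] (L.L ⊗[ℂ] A) ⊗[ℂ] Ω.A →ₗ[ℂ] (L.L ⊗[ℂ] A) ⊗[ℂ] Ω.A) :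
    Prop where
  d_tmul (p : ℤ) (q : ℕ) (x : L.L) (a : A) (α : Ω.A) (hx : x ∈ L.gr p) (hα : α ∈ Ω.grading q) :
    D ((x ⊗ₜ a) ⊗ₜ α) = (L.dL x ⊗ₜ a) ⊗ₜ α + (sgn p : ℂ) • ((x ⊗ₜ a) ⊗ₜ Ω.d α)
  br_tmul (p p' : ℤ) (q q' : ℕ) (x y : L.L) (a b : A) (α β : Ω.A) (hx : x ∈ L.gr p)
    (hy : y ∈ L.gr p') (hα : α ∈ Ω.grading q) (hβ : β ∈ Ω.grading q') :
    Br ((x ⊗ₜ a) ⊗ₜ α) ((y ⊗ₜ b) ⊗ₜ β) =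
      (sgn (q * p') : ℂ) • ((L.br x y ⊗ₜ (a * b)) ⊗ₜ (α * β))

section TotalDegree

variable {l : ℕ} {Ω : SimplexForms l} {L : GradedDGLA} {A : Type*} [CommRing A] [Algebra ℂ A]
  {m : Submodule ℂ A} {r : ℤ}

theorem tmul_mem_totalDegree {p : ℤ} {q : ℕ} {x : L.L} {a : A} {α : Ω.A} (hr : p + q = r)
    (hx : x ∈ L.gr p) (ha : a ∈ m) (hα : α ∈ Ω.grading q) :
    (x ⊗ₜ[ℂ] a) ⊗ₜ[ℂ] α ∈ totalDegree Ω L m r := by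
  obtain rfl : p = r - q := by omega
  exact Submodule.mem_iSup_of_mem q ⟨((⟨x, hx⟩ : L.gr _) ⊗ₜ (⟨a, ha⟩ : m)) ⊗ₜ
    (⟨α, hα⟩ : Ω.grading q), rfl⟩

@[elab_as_elim]
theorem totalDegree_induction
    {motive : ∀ u : (L.L ⊗[ℂ] A) ⊗[ℂ] Ω.A, u ∈ totalDegree Ω L m r → Prop}
    (tmul : ∀ (p : ℤ) (q : ℕ) (x : L.L) (a : A) (α : Ω.A) (hr : p + q = r) (hx : x ∈ L.gr p)
      (ha : a ∈ m) (hα : α ∈ Ω.grading q),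
      motive ((x ⊗ₜ a) ⊗ₜ α) (tmul_mem_totalDegree hr hx ha hα))
    (zero : motive 0 (zero_mem _))
    (add : ∀ u v hu hv, motive u hu → motive v hv → motive (u + v) (add_mem hu hv))
    {u : (L.L ⊗[ℂ] A) ⊗[ℂ] Ω.A} (hu : u ∈ totalDegree Ω L m r) : motive u hu := by
  suffices ∃ h, motive u h from this.2
  have add' : ∀ u v, (∃ h, motive u h) → (∃ h, motive v h) → ∃ h, motive (u + v) h :=
    fun u v ⟨hu, hu'⟩ ⟨hv, hv'⟩ => ⟨_, add u v hu hv hu' hv'⟩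
  refine Submodule.iSup_induction _ (motive := fun u => ∃ h, motive u h) hu (fun q v hv => ?_)
    ⟨_, zero⟩ add'
  obtain ⟨z, rfl⟩ := hv
  induction z using TensorProduct.induction_on with
  | zero => rw [map_zero]; exact ⟨_, zero⟩
  | add u v hu hv => rw [map_add]; exact add' _ _ hu hv
  | tmul w α =>
    induction w using TensorProduct.induction_on with
    | zero => rw [zero_tmul, map_zero]; exact ⟨_, zero⟩
    | add u v hu hv => rw [add_tmul, map_add]; exact add' _ _ hu hv
    | tmul x a => exact ⟨_, tmul _ q x a α (sub_add_cancel r q) x.2 a.2 α.2⟩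

end TotalDegree

namespace IsTensorDGLA

variable {l : ℕ} {Ω : SimplexForms l} {L : GradedDGLA} {A : Type*} [CommRing A] [Algebra ℂ A]
  {D : (L.L ⊗[ℂ] A) ⊗[ℂ] Ω.A →ₗ[ℂ] (L.L ⊗[ℂ] A) ⊗[ℂ] Ω.A}
  {Br : (L.L ⊗[ℂ] A) ⊗[ℂ] Ω.A →ₗ[ℂ] (L.L ⊗[ℂ] A) ⊗[ℂ] Ω.A →ₗ[ℂ] (L.L ⊗[ℂ] A) ⊗[ℂ] Ω.A}
  {m m' m'' : Submodule ℂ A} {r r' r'' : ℤ} {u v w : (L.L ⊗[ℂ] A) ⊗[ℂ] Ω.A}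

theorem of_zsmul
    -- Here `ℤ` acts through the left tensor factor, which is `zsmul` only up to unfolding.
    (hD : ∀ (p : ℤ) (q : ℕ) (x : L.L) (a : A) (α : Ω.A), x ∈ L.gr p → α ∈ Ω.grading q →
      D ((x ⊗ₜ a) ⊗ₜ α) = (L.dL x ⊗ₜ a) ⊗ₜ α + sgn p • ((x ⊗ₜ a) ⊗ₜ Ω.d α))
    (hBr : ∀ (p p' : ℤ) (q q' : ℕ) (x y : L.L) (a b : A) (α β : Ω.A), x ∈ L.gr p → y ∈ L.gr p' →
      α ∈ Ω.grading q → β ∈ Ω.grading q' → Br ((x ⊗ₜ a) ⊗ₜ α) ((y ⊗ₜ b) ⊗ₜ β) =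
        sgn (q * p') • ((L.br x y ⊗ₜ (a * b)) ⊗ₜ (α * β))) :
    IsTensorDGLA Ω L D Br where
  d_tmul p q x a α hx hα :=
    (hD p q x a α hx hα).trans (congrArg (_ + ·) (Int.cast_smul_eq_zsmul ℂ _ _).symm)
  br_tmul p p' q q' x y a b α β hx hy hα hβ :=
    (hBr p p' q q' x y a b α β hx hy hα hβ).trans (Int.cast_smul_eq_zsmul ℂ _ _).symm

theorem d_mem (h : IsTensorDGLA Ω L D Br) (hu : u ∈ totalDegree Ω L m r) :
    D u ∈ totalDegree Ω L m (r + 1) := by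
  induction hu using totalDegree_induction with
  | zero => simp
  | add u v _ _ hu hv => simpa using add_mem hu hv
  | tmul p q x a α hr hx ha hα =>
    rw [h.d_tmul p q x a α hx hα]
    exact add_mem (tmul_mem_totalDegree (by omega) (L.d_mem p x hx) ha hα)
      (Submodule.smul_mem _ _ (tmul_mem_totalDegree (by push_cast; omega) hx ha (Ω.d_mem q α hα)))

theorem br_mem (h : IsTensorDGLA Ω L D Br) (hm : ∀ a ∈ m, ∀ b ∈ m', a * b ∈ m'')
    (hu : u ∈ totalDegree Ω L m r) (hv : v ∈ totalDegree Ω L m' r') :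
    Br u v ∈ totalDegree Ω L m'' (r + r') := by
  induction hu using totalDegree_induction with
  | zero => simp
  | add u u' _ _ hu hu' => simpa using add_mem hu hu'
  | tmul p q x a α hr hx ha hα =>
    induction hv using totalDegree_induction with
    | zero => simp
    | add v v' _ _ hv hv' => simpa using add_mem hv hv'
    | tmul p' q' y b β hr' hy hb hβ =>
      rw [h.br_tmul p p' q q' x y a b α β hx hy hα hβ]
      exact Submodule.smul_mem _ _ (tmul_mem_totalDegree (by push_cast; omega)
        (L.br_mem p p' x y hx hy) (hm a ha b hb) (SetLike.mul_mem_graded hα hβ))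

theorem br_eq_zero (h : IsTensorDGLA Ω L D Br) (hm : ∀ a ∈ m, ∀ b ∈ m', a * b = 0)
    (hu : u ∈ totalDegree Ω L m r) (hv : v ∈ totalDegree Ω L m' r') : Br u v = 0 := by
  induction hu using totalDegree_induction with
  | zero => simp
  | add u u' _ _ hu hu' => simp [hu, hu']
  | tmul p q x a α _ hx ha hα =>
    induction hv using totalDegree_induction with
    | zero => simp
    | add v v' _ _ hv hv' => simp [hv, hv']
    | tmul p' q' y b β _ hy hb hβ =>
      simp [h.br_tmul p p' q q' x y a b α β hx hy hα hβ, hm a ha b hb]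

theorem d_d (h : IsTensorDGLA Ω L D Br) (hu : u ∈ totalDegree Ω L m r) : D (D u) = 0 := by
  induction hu using totalDegree_induction with
  | zero => simp
  | add u v _ _ hu hv => simp [hu, hv]
  | tmul p q x a α hr hx ha hα =>
    rw [h.d_tmul p q x a α hx hα, map_add, map_smul, h.d_tmul _ q _ a α (L.d_mem p x hx) hα,
      h.d_tmul p _ x a _ hx (Ω.d_mem q α hα), L.d_sq, Ω.d_sq, sgn_add, show sgn 1 = -1 by decide]
    simp only [zero_tmul, tmul_zero]
    module

theorem leib (h : IsTensorDGLA Ω L D Br) (hu : u ∈ totalDegree Ω L m r)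
    (hv : v ∈ totalDegree Ω L m' r') : D (Br u v) = Br (D u) v + (sgn r : ℂ) • Br u (D v) := by
  induction hu using totalDegree_induction with
  | zero => simp
  | add u u' _ _ hu hu' => simp only [map_add, LinearMap.add_apply, hu, hu']; module
  | tmul p q x a α hr hx _ hα =>
    induction hv using totalDegree_induction with
    | zero => simp
    | add v v' _ _ hv hv' => simp only [map_add, hv, hv']; module
    | tmul p' q' y b β hr' hy hb hβ =>
      rw [h.br_tmul p p' q q' x y a b α β hx hy hα hβ, h.d_tmul p q x a α hx hα,
        h.d_tmul p' q' y b β hy hβ]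
      simp only [map_add, map_smul, LinearMap.add_apply, LinearMap.smul_apply]
      rw [h.d_tmul (p + p') (q + q') _ _ _ (L.br_mem p p' x y hx hy) (SetLike.mul_mem_graded hα hβ),
        h.br_tmul (p + 1) p' q q' _ y a b α β (L.d_mem p x hx) hy hα hβ,
        h.br_tmul p p' (q + 1) q' x y a b _ β hx hy (Ω.d_mem q α hα) hβ,
        h.br_tmul p (p' + 1) q q' x _ a b α β hx (L.d_mem p' y hy) hα hβ,
        h.br_tmul p p' q (q' + 1) x y a b α _ hx hy hα (Ω.d_mem q' β hβ),
        L.leib p x y hx, Ω.leibniz q α β hα, ← hr, ← sgn_natCast]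
      simp only [← Int.cast_smul_eq_zsmul ℂ, add_tmul, tmul_add, ← smul_tmul', tmul_smul,
        Nat.cast_add, Nat.cast_one, add_mul, mul_add, sgn_add, Int.cast_mul, one_mul, mul_one]
      match_scalars <;> ring_nf
      all_goals simp [sgn_sq]

theorem skew (h : IsTensorDGLA Ω L D Br) (hu : u ∈ totalDegree Ω L m r)
    (hv : v ∈ totalDegree Ω L m' r') : Br u v = -((sgn (r * r') : ℂ) • Br v u) := by
  induction hu using totalDegree_induction with
  | zero => simp
  | add u u' _ _ hu hu' => simp only [map_add, LinearMap.add_apply, hu, hu']; module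
  | tmul p q x a α hr hx _ hα =>
    induction hv using totalDegree_induction with
    | zero => simp
    | add v v' _ _ hv hv' => simp only [map_add, LinearMap.add_apply, hv, hv']; module
    | tmul p' q' y b β hr' hy hb hβ =>
      rw [h.br_tmul p p' q q' x y a b α β hx hy hα hβ, h.br_tmul p' p q' q y x b a β α hy hx hβ hα,
        L.skew p p' x y hx hy, Ω.gcomm q q' α β hα hβ, mul_comm a b, ← hr, ← hr', ← sgn_natCast]
      simp only [← Int.cast_smul_eq_zsmul ℂ, neg_tmul, ← smul_tmul', tmul_smul, Nat.cast_mul,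
        mul_add, add_mul, sgn_add, Int.cast_mul, mul_comm p (q' : ℤ)]
      match_scalars
      ring_nf
      simp [sgn_sq]

theorem jacobi (h : IsTensorDGLA Ω L D Br) (hu : u ∈ totalDegree Ω L m r)
    (hv : v ∈ totalDegree Ω L m' r') (hw : w ∈ totalDegree Ω L m'' r'') :
    Br u (Br v w) = Br (Br u v) w + (sgn (r * r') : ℂ) • Br v (Br u w) := by
  induction hu using totalDegree_induction with
  | zero => simp
  | add u u' _ _ hu hu' => simp only [map_add, LinearMap.add_apply, hu, hu']; module
  | tmul p q x a α hr hx _ hα =>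
    induction hv using totalDegree_induction with
    | zero => simp
    | add v v' _ _ hv hv' => simp only [map_add, LinearMap.add_apply, hv, hv']; module
    | tmul p' q' y b β hr' hy _ hβ =>
      induction hw using totalDegree_induction with
      | zero => simp
      | add w w' _ _ hw hw' => simp only [map_add, hw, hw']; module
      | tmul p'' q'' z c γ hr'' hz hc hγ =>
        rw [h.br_tmul p p' q q' x y a b α β hx hy hα hβ,
          h.br_tmul p p'' q q'' x z a c α γ hx hz hα hγ,
          h.br_tmul p' p'' q' q'' y z b c β γ hy hz hβ hγ]
        simp only [map_smul, LinearMap.smul_apply]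
        rw [h.br_tmul p (p' + p'') q (q' + q'') _ _ _ _ _ _ hx (L.br_mem _ _ _ _ hy hz) hα
            (SetLike.mul_mem_graded hβ hγ),
          h.br_tmul p' (p + p'') q' (q + q'') _ _ _ _ _ _ hy (L.br_mem _ _ _ _ hx hz) hβ
            (SetLike.mul_mem_graded hα hγ),
          h.br_tmul (p + p') p'' (q + q') q'' _ _ _ _ _ _ (L.br_mem _ _ _ _ hx hy) hz
            (SetLike.mul_mem_graded hα hβ) hγ,
          L.jacobi p p' x y z hx hy, ← mul_assoc β α γ, mul_assoc a b c, ← mul_assoc α β γ,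
          Ω.gcomm q q' α β hα hβ, mul_left_comm b a c, ← hr, ← hr', ← sgn_natCast]
        simp only [← Int.cast_smul_eq_zsmul ℂ, add_tmul, ← smul_tmul', tmul_smul, smul_mul_assoc,
          Nat.cast_add, Nat.cast_mul, mul_add, add_mul, sgn_add, Int.cast_mul, mul_comm p (q' : ℤ)]
        match_scalars <;> ring_nf
        all_goals simp [sgn_sq]

theorem isDGLA (h : IsTensorDGLA Ω L D Br) (hm : ∀ a ∈ m, ∀ b ∈ m, a * b ∈ m) :
    IsDGLA (totalDegree Ω L m) D Br where
  d_mem := h.d_mem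
  br_mem := h.br_mem hm
  d_d := h.d_d
  leib := h.leib
  skew := h.skew
  jacobi := h.jacobi

end IsTensorDGLA

/-! ### Change of coefficients and of forms -/

/-- The map `L ⊗ A ⊗ Ω → L ⊗ B ⊗ Ω'` induced by a map `g` of coefficients and a map `f` of forms. -/
noncomputable def tensorMap (L : GradedDGLA) {A B : Type*} [CommRing A] [Algebra ℂ A] [CommRing B]
    [Algebra ℂ B] {l l' : ℕ} {Ω : SimplexForms l} {Ω' : SimplexForms l'} (g : A →ₗ[ℂ] B)
    (f : Ω.A →ₗ[ℂ] Ω'.A) : (L.L ⊗[ℂ] A) ⊗[ℂ] Ω.A →ₗ[ℂ] (L.L ⊗[ℂ] B) ⊗[ℂ] Ω'.A :=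
  TensorProduct.map (g.lTensor L.L) f

section TensorMap

variable {L : GradedDGLA} {A B : Type*} [CommRing A] [Algebra ℂ A] [CommRing B] [Algebra ℂ B]
  {l l' : ℕ} {Ω : SimplexForms l} {Ω' : SimplexForms l'}

@[simp]
theorem tensorMap_tmul (g : A →ₗ[ℂ] B) (f : Ω.A →ₗ[ℂ] Ω'.A) (x : L.L) (a : A) (α : Ω.A) :
    tensorMap L g f ((x ⊗ₜ a) ⊗ₜ α) = (x ⊗ₜ g a) ⊗ₜ f α :=
  rfl

theorem tensorMap_id_left (f : Ω.A →ₗ[ℂ] Ω'.A) :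
    tensorMap L LinearMap.id f = f.lTensor (L.L ⊗[ℂ] A) := by
  rw [tensorMap, LinearMap.lTensor_id, LinearMap.lTensor]

theorem tensorMap_mem_totalDegree {m : Submodule ℂ A} {m' : Submodule ℂ B} {g : A →ₗ[ℂ] B}
    {f : Ω.A →ₗ[ℂ] Ω'.A} {r : ℤ} (hg : ∀ a ∈ m, g a ∈ m')
    (hf : ∀ q : ℕ, ∀ α ∈ Ω.grading q, f α ∈ Ω'.grading q) {u : (L.L ⊗[ℂ] A) ⊗[ℂ] Ω.A}
    (hu : u ∈ totalDegree Ω L m r) : tensorMap L g f u ∈ totalDegree Ω' L m' r := by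
  induction hu using totalDegree_induction with
  | zero => simp
  | add u v _ _ hu hv => simpa using add_mem hu hv
  | tmul p q x a α hr hx ha hα => exact tmul_mem_totalDegree hr hx (hg a ha) (hf q α hα)

theorem lTensor_mem_totalDegree {m : Submodule ℂ A} {f : Ω.A →ₗ[ℂ] Ω'.A} {r : ℤ}
    (hf : ∀ q : ℕ, ∀ α ∈ Ω.grading q, f α ∈ Ω'.grading q) {u : (L.L ⊗[ℂ] A) ⊗[ℂ] Ω.A}
    (hu : u ∈ totalDegree Ω L m r) : f.lTensor (L.L ⊗[ℂ] A) u ∈ totalDegree Ω' L m r := by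
  rw [← tensorMap_id_left]
  exact tensorMap_mem_totalDegree (fun _ => id) hf hu

theorem lTensor_tensorMap (g : A →ₗ[ℂ] B) (f : Ω.A →ₗ[ℂ] Ω'.A) (u : (L.L ⊗[ℂ] A) ⊗[ℂ] Ω.A) :
    f.lTensor (L.L ⊗[ℂ] B) (tensorMap L g LinearMap.id u) =
      tensorMap L g LinearMap.id (f.lTensor (L.L ⊗[ℂ] A) u) := by
  simp only [tensorMap, LinearMap.lTensor_def, TensorProduct.map_map, LinearMap.id_comp,
    LinearMap.comp_id]

theorem totalDegree_mono {m m' : Submodule ℂ A} (h : m ≤ m') (r : ℤ) :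
    totalDegree Ω L m r ≤ totalDegree Ω L m' r := fun u hu => by
  simpa [tensorMap_id_left] using
    tensorMap_mem_totalDegree (Ω' := Ω) (g := LinearMap.id) (f := LinearMap.id) h (fun _ _ => id) hu

theorem tensorMap_eq_zero {m : Submodule ℂ A} {g : A →ₗ[ℂ] B} {f : Ω.A →ₗ[ℂ] Ω'.A} {r : ℤ}
    {u : (L.L ⊗[ℂ] A) ⊗[ℂ] Ω.A} (hu : u ∈ totalDegree Ω L m r) (hg : ∀ a ∈ m, g a = 0) :
    tensorMap L g f u = 0 := by
  induction hu using totalDegree_induction with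
  | zero => simp
  | add u v _ _ hu hv => simp [hu, hv]
  | tmul _ _ x a α _ _ ha _ => simp [hg a ha]

theorem totalDegree_map_le (m : Submodule ℂ A) (g : A →ₗ[ℂ] B) (r : ℤ) :
    totalDegree Ω L (m.map g) r ≤ (totalDegree Ω L m r).map (tensorMap L g LinearMap.id) := by
  intro u hu
  induction hu using totalDegree_induction with
  | zero => exact zero_mem _
  | add u v _ _ hu hv => exact add_mem hu hv
  | tmul p q x b α hr hx hb hα =>
    obtain ⟨a, ha, rfl⟩ := hb
    exact ⟨_, tmul_mem_totalDegree hr hx ha hα, rfl⟩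

theorem exists_section_on {K V W : Type*} [Field K] [AddCommGroup V] [Module K V] [AddCommGroup W]
    [Module K W] (f : V →ₗ[K] W) (S : Submodule K V) :
    ∃ s : W →ₗ[K] V, (∀ w, s w ∈ S) ∧ ∀ v ∈ S, f (s (f v)) = f v := by
  obtain ⟨t, ht⟩ := (f.submoduleMap S).exists_rightInverse_of_surjective
    (LinearMap.range_eq_top.mpr (f.submoduleMap_surjective S))
  obtain ⟨s, hs⟩ := t.exists_extend
  refine ⟨S.subtype ∘ₗ s, fun w => (s w).2, fun v hv => ?_⟩
  have hsv : s (f v) = t (f.submoduleMap S ⟨v, hv⟩) :=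
    LinearMap.congr_fun hs (f.submoduleMap S ⟨v, hv⟩)
  have htv := LinearMap.congr_fun ht (f.submoduleMap S ⟨v, hv⟩)
  simpa [hsv] using congrArg Subtype.val htv

theorem mem_totalDegree_ker {m : Submodule ℂ A} {g : A →ₗ[ℂ] B} {r : ℤ}
    {u : (L.L ⊗[ℂ] A) ⊗[ℂ] Ω.A} (hu : u ∈ totalDegree Ω L m r)
    (hgu : tensorMap L g (LinearMap.id : Ω.A →ₗ[ℂ] Ω.A) u = 0) :
    u ∈ totalDegree Ω L (m ⊓ LinearMap.ker g) r := by
  obtain ⟨s, hsm, hs⟩ := exists_section_on g m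
  have hproj : tensorMap L (LinearMap.id - s ∘ₗ g) (LinearMap.id : Ω.A →ₗ[ℂ] Ω.A) u = u := by
    have := congrArg (tensorMap L s LinearMap.id) hgu
    simp only [tensorMap, ← LinearMap.rTensor_def, LinearMap.lTensor_sub, LinearMap.rTensor_sub,
      LinearMap.lTensor_comp, LinearMap.rTensor_comp] at this ⊢
    simp [this]
  rw [← hproj]
  refine tensorMap_mem_totalDegree (fun a ha => ?_) (fun _ _ => id) hu
  exact ⟨sub_mem ha (hsm _), by simp [hs a ha]⟩

end TensorMap

namespace IsTensorDGLA

variable {L : GradedDGLA} {A B : Type*} [CommRing A] [Algebra ℂ A] [CommRing B] [Algebra ℂ B]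
  {l l' : ℕ} {Ω : SimplexForms l} {Ω' : SimplexForms l'}
  {D : (L.L ⊗[ℂ] A) ⊗[ℂ] Ω.A →ₗ[ℂ] (L.L ⊗[ℂ] A) ⊗[ℂ] Ω.A}
  {Br : (L.L ⊗[ℂ] A) ⊗[ℂ] Ω.A →ₗ[ℂ] (L.L ⊗[ℂ] A) ⊗[ℂ] Ω.A →ₗ[ℂ] (L.L ⊗[ℂ] A) ⊗[ℂ] Ω.A}
  {D' : (L.L ⊗[ℂ] B) ⊗[ℂ] Ω'.A →ₗ[ℂ] (L.L ⊗[ℂ] B) ⊗[ℂ] Ω'.A}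
  {Br' : (L.L ⊗[ℂ] B) ⊗[ℂ] Ω'.A →ₗ[ℂ] (L.L ⊗[ℂ] B) ⊗[ℂ] Ω'.A →ₗ[ℂ] (L.L ⊗[ℂ] B) ⊗[ℂ] Ω'.A}
  {m m' : Submodule ℂ A} {r r' : ℤ} {u v : (L.L ⊗[ℂ] A) ⊗[ℂ] Ω.A}

theorem curvature_mem (h : IsTensorDGLA Ω L D Br) (hm : ∀ a ∈ m, ∀ b ∈ m, a * b ∈ m)
    (hu : u ∈ totalDegree Ω L m 1) : curvature D Br u ∈ totalDegree Ω L m (1 + 1) :=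
  add_mem (h.d_mem hu) (Submodule.smul_mem _ _ (h.br_mem hm hu hu))

theorem map_d (h : IsTensorDGLA Ω L D Br) (h' : IsTensorDGLA Ω' L D' Br') (g : A →ₗ[ℂ] B)
    {f : Ω.A →ₐ[ℂ] Ω'.A} (hf : IsDgaHom Ω Ω' f) (hu : u ∈ totalDegree Ω L m r) :
    tensorMap L g f.toLinearMap (D u) = D' (tensorMap L g f.toLinearMap u) := by
  induction hu using totalDegree_induction with
  | zero => simp
  | add u v _ _ hu hv => simp only [map_add, hu, hv]
  | tmul p q x a α _ hx _ hα =>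
    simp [h.d_tmul p q x a α hx hα, h'.d_tmul p q x (g a) (f α) hx (hf.map_mem hα), hf.map_d]

theorem map_br (h : IsTensorDGLA Ω L D Br) (h' : IsTensorDGLA Ω' L D' Br') (g : A →ₐ[ℂ] B)
    {f : Ω.A →ₐ[ℂ] Ω'.A} (hf : IsDgaHom Ω Ω' f) (hu : u ∈ totalDegree Ω L m r)
    (hv : v ∈ totalDegree Ω L m' r') :
    tensorMap L g.toLinearMap f.toLinearMap (Br u v) =
      Br' (tensorMap L g.toLinearMap f.toLinearMap u)
        (tensorMap L g.toLinearMap f.toLinearMap v) := by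
  induction hu using totalDegree_induction with
  | zero => simp
  | add u u' _ _ hu hu' => simp only [map_add, LinearMap.add_apply, hu, hu']
  | tmul p q x a α _ hx _ hα =>
    induction hv using totalDegree_induction with
    | zero => simp
    | add v v' _ _ hv hv' => simp only [map_add, hv, hv']
    | tmul p' q' y b β _ hy _ hβ =>
      simp [h.br_tmul p p' q q' x y a b α β hx hy hα hβ,
        h'.br_tmul p p' q q' x y (g a) (g b) (f α) (f β) hx hy (hf.map_mem hα) (hf.map_mem hβ)]

theorem map_curvature (h : IsTensorDGLA Ω L D Br) (h' : IsTensorDGLA Ω' L D' Br') (g : A →ₐ[ℂ] B)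
    {f : Ω.A →ₐ[ℂ] Ω'.A} (hf : IsDgaHom Ω Ω' f) (hu : u ∈ totalDegree Ω L m r) :
    tensorMap L g.toLinearMap f.toLinearMap (curvature D Br u) =
      curvature D' Br' (tensorMap L g.toLinearMap f.toLinearMap u) := by
  simp only [curvature, map_add, map_smul, h.map_d h' _ hf hu, h.map_br h' g hf hu hu]

end IsTensorDGLA

/-! ### Maurer–Cartan elements on horns -/

/-- The operator on `L ⊗ A ⊗ Ω` induced by an operator `h` of degree `-1` on `Ω`, with the Koszul
sign placed on the forms. -/
noncomputable def tensorHomotopy (L : GradedDGLA) (A : Type*) [CommRing A] [Algebra ℂ A] {l : ℕ}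
    {Ω : SimplexForms l} (h : Ω.A →ₗ[ℂ] Ω.A) :
    (L.L ⊗[ℂ] A) ⊗[ℂ] Ω.A →ₗ[ℂ] (L.L ⊗[ℂ] A) ⊗[ℂ] Ω.A :=
  (h ∘ₗ (gradeInvolution Ω.grading).toLinearMap).lTensor (L.L ⊗[ℂ] A)

section TensorHomotopy

variable {L : GradedDGLA} {A : Type*} [CommRing A] [Algebra ℂ A] {l : ℕ} {Ω : SimplexForms l}
  {h e : Ω.A →ₗ[ℂ] Ω.A} {m : Submodule ℂ A} {r : ℤ} {u : (L.L ⊗[ℂ] A) ⊗[ℂ] Ω.A}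

theorem tensorHomotopy_tmul {q : ℕ} {α : Ω.A} (hα : α ∈ Ω.grading q) (z : L.L ⊗[ℂ] A) :
    tensorHomotopy L A h (z ⊗ₜ α) = (sgn q : ℂ) • (z ⊗ₜ h α) := by
  rw [tensorHomotopy, LinearMap.lTensor_tmul, LinearMap.comp_apply, AlgHom.toLinearMap_apply,
    gradeInvolution_of_mem hα, map_zsmul, ← Int.cast_smul_eq_zsmul ℂ, tmul_smul, sgn_natCast]

theorem IsCochainHomotopy.tensorHomotopy_mem (hh : IsCochainHomotopy Ω h e)
    (hu : u ∈ totalDegree Ω L m (r + 1)) : tensorHomotopy L A h u ∈ totalDegree Ω L m r := by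
  induction hu using totalDegree_induction with
  | zero => simp
  | add u v _ _ hu hv => simpa using add_mem hu hv
  | tmul p q x a α hr hx ha hα =>
    rw [tensorHomotopy_tmul hα]
    refine Submodule.smul_mem _ _ ?_
    cases q with
    | zero => simp [hh.eq_zero hα]
    | succ q => exact tmul_mem_totalDegree (by push_cast at hr; omega) hx ha (hh.map_mem hα)

theorem IsTensorDGLA.d_tensorHomotopy
    {D : (L.L ⊗[ℂ] A) ⊗[ℂ] Ω.A →ₗ[ℂ] (L.L ⊗[ℂ] A) ⊗[ℂ] Ω.A}
    {Br : (L.L ⊗[ℂ] A) ⊗[ℂ] Ω.A →ₗ[ℂ] (L.L ⊗[ℂ] A) ⊗[ℂ] Ω.A →ₗ[ℂ] (L.L ⊗[ℂ] A) ⊗[ℂ] Ω.A}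
    (hD : IsTensorDGLA Ω L D Br) (hh : IsCochainHomotopy Ω h e) (hu : u ∈ totalDegree Ω L m r) :
    D (tensorHomotopy L A h u) =
      tensorHomotopy L A h (D u) + (sgn r : ℂ) • (u - e.lTensor (L.L ⊗[ℂ] A) u) := by
  induction hu using totalDegree_induction with
  | zero => simp
  | add u v _ _ hu hv => simp only [map_add, hu, hv]; module
  | tmul p q x a α hr hx _ hα =>
    obtain ⟨q', hhα⟩ : ∃ q', h α ∈ Ω.grading q' := by
      cases q with
      | zero => exact ⟨0, by simp [hh.eq_zero hα]⟩
      | succ q => exact ⟨q, hh.map_mem hα⟩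
    rw [tensorHomotopy_tmul hα, map_smul, hD.d_tmul p q' x a _ hx hhα, hD.d_tmul p q x a α hx hα,
      map_add, map_smul, tensorHomotopy_tmul hα, tensorHomotopy_tmul (Ω.d_mem q α hα),
      LinearMap.lTensor_tmul, ← tmul_sub, ← hh.d_add, tmul_add, ← hr, sgn_add, Nat.cast_add,
      sgn_add, Nat.cast_one, show sgn 1 = -1 by decide]
    push_cast
    module

theorem IsHornContraction.exists_tensor_primitive {n : ℕ} {Q : SimplexForms (n + 2)} {l : ℕ}
    {Q' : SimplexForms l} {f : Fin (n + 3) → Q.A →ₐ[ℂ] Q'.A} {k : Fin (n + 3)} {h e : Q.A →ₗ[ℂ] Q.A}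
    (hc : IsHornContraction Q (fun i => (f i).toLinearMap) k h e)
    (hf : ∀ i, IsDgaHom Q Q' (f i))
    {D : (L.L ⊗[ℂ] A) ⊗[ℂ] Q.A →ₗ[ℂ] (L.L ⊗[ℂ] A) ⊗[ℂ] Q.A}
    {Br : (L.L ⊗[ℂ] A) ⊗[ℂ] Q.A →ₗ[ℂ] (L.L ⊗[ℂ] A) ⊗[ℂ] Q.A →ₗ[ℂ] (L.L ⊗[ℂ] A) ⊗[ℂ] Q.A}
    (hD : IsTensorDGLA Q L D Br) {u : (L.L ⊗[ℂ] A) ⊗[ℂ] Q.A}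
    (hu : u ∈ totalDegree Q L m (r + 1)) (hDu : D u = 0)
    (hres : ∀ i ≠ k, (f i).toLinearMap.lTensor (L.L ⊗[ℂ] A) u = 0) :
    ∃ v ∈ totalDegree Q L m r, D v = u ∧
      ∀ i ≠ k, (f i).toLinearMap.lTensor (L.L ⊗[ℂ] A) v = 0 := by
  have hpoint : e.lTensor (L.L ⊗[ℂ] A) u = 0 := by
    obtain ⟨i, hi⟩ := exists_ne k
    obtain ⟨θ, rfl⟩ := hc.point_factors hi
    rw [LinearMap.lTensor_comp_apply, hres i hi, map_zero]
  refine ⟨(sgn (r + 1) : ℂ) • tensorHomotopy L A h u,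
    Submodule.smul_mem _ _ (hc.tensorHomotopy_mem hu), ?_, fun i hi => ?_⟩
  · rw [map_smul, hD.d_tensorHomotopy hc.toIsCochainHomotopy hu, hDu, hpoint, map_zero, zero_add,
      sub_zero, smul_smul, ← sq, sgn_sq, one_smul]
  · obtain ⟨ρ, hρ⟩ := hc.restricts hi
    have hcomm : (f i).toLinearMap ∘ₗ h ∘ₗ (gradeInvolution Q.grading).toLinearMap =
        ρ ∘ₗ (gradeInvolution Q'.grading).toLinearMap ∘ₗ (f i).toLinearMap := by
      rw [← LinearMap.comp_assoc, hρ]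
      exact LinearMap.ext fun a => congrArg ρ ((hf i).map_gradeInvolution a)
    rw [map_smul, tensorHomotopy, ← LinearMap.lTensor_comp_apply, hcomm,
      LinearMap.lTensor_comp_apply, LinearMap.lTensor_comp_apply, hres i hi, map_zero, map_zero,
      smul_zero]

end TensorHomotopy

namespace IsPolyDeRhamFaces

variable {F : ∀ k, SimplexForms k} {pb : ∀ k : ℕ, Fin (k + 2) → (F (k + 1)).A →ₐ[ℂ] (F k).A}
  {n : ℕ} {k : Fin (n + 3)} {L : GradedDGLA} {A B : Type*} [CommRing A] [Algebra ℂ A]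
  [CommRing B] [Algebra ℂ B] {I : Submodule ℂ A} {J : Submodule ℂ B} {r : ℤ}

theorem exists_tensor_filler (h : IsPolyDeRhamFaces F pb)
    {t : ∀ i : Fin (n + 3), i ≠ k → (L.L ⊗[ℂ] A) ⊗[ℂ] (F (n + 1)).A}
    (ht : IsHornFamily (fun i => (pb n i).toLinearMap.lTensor (L.L ⊗[ℂ] A)) k t)
    (w₀ : (L.L ⊗[ℂ] A) ⊗[ℂ] (F (n + 2)).A)
    (htI : ∀ i hi, t i hi - (pb (n + 1) i).toLinearMap.lTensor (L.L ⊗[ℂ] A) w₀ ∈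
      totalDegree (F (n + 1)) L I r) :
    ∃ w, w - w₀ ∈ totalDegree (F (n + 2)) L I r ∧
      ∀ i hi, (pb (n + 1) i).toLinearMap.lTensor (L.L ⊗[ℂ] A) w = t i hi := by
  obtain ⟨σ, hσ, hsec⟩ := h.exists_isHornSection n k
  refine (hsec.lTensor (L.L ⊗[ℂ] A)).exists_filler (fun i u hu => ?_) (fun i u hu => ?_) ht w₀ htI
  · exact lTensor_mem_totalDegree (fun _ _ => (h.isDgaHom _ i).map_mem) hu
  · exact lTensor_mem_totalDegree (fun _ _ => (hσ i).map_mem) hu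

theorem exists_tensor_lift (h : IsPolyDeRhamFaces F pb) (π : A →ₗ[ℂ] B) (hJ : J ≤ I.map π)
    {ψ : ∀ i : Fin (n + 3), i ≠ k → (L.L ⊗[ℂ] A) ⊗[ℂ] (F (n + 1)).A}
    (hψI : ∀ i hi, ψ i hi ∈ totalDegree (F (n + 1)) L I r)
    (hψ : IsHornFamily (fun i => (pb n i).toLinearMap.lTensor (L.L ⊗[ℂ] A)) k ψ)
    {φB : (L.L ⊗[ℂ] B) ⊗[ℂ] (F (n + 2)).A} (hφB : φB ∈ totalDegree (F (n + 2)) L J r)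
    (hres : ∀ i hi, (pb (n + 1) i).toLinearMap.lTensor (L.L ⊗[ℂ] B) φB =
      tensorMap L π LinearMap.id (ψ i hi)) :
    ∃ φ ∈ totalDegree (F (n + 2)) L I r,
      (∀ i hi, (pb (n + 1) i).toLinearMap.lTensor (L.L ⊗[ℂ] A) φ = ψ i hi) ∧
      tensorMap L π LinearMap.id φ = φB := by
  obtain ⟨φ₀, hφ₀, rfl⟩ : φB ∈ (totalDegree (F (n + 2)) L I r).map (tensorMap L π LinearMap.id) :=
    totalDegree_map_le I π r (totalDegree_mono hJ r hφB)
  have hψφ₀ : ∀ i hi, ψ i hi - (pb (n + 1) i).toLinearMap.lTensor (L.L ⊗[ℂ] A) φ₀ ∈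
      totalDegree (F (n + 1)) L (I ⊓ LinearMap.ker π) r := fun i hi => by
    refine mem_totalDegree_ker (sub_mem (hψI i hi) (lTensor_mem_totalDegree
      (fun _ _ => (h.isDgaHom _ i).map_mem) hφ₀)) ?_
    rw [map_sub, ← lTensor_tensorMap, hres i hi, sub_self]
  obtain ⟨φ, hφ, hφψ⟩ := h.exists_tensor_filler hψ φ₀ hψφ₀
  refine ⟨φ, ?_, hφψ, ?_⟩
  · simpa using add_mem (totalDegree_mono inf_le_left r hφ) hφ₀
  · have : tensorMap L π LinearMap.id (φ - φ₀) = 0 := tensorMap_eq_zero hφ fun _ ha => ha.2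
    rwa [map_sub, sub_eq_zero] at this

theorem exists_maurerCartan_extension (h : IsPolyDeRhamFaces F pb)
    {DA : ∀ m, (L.L ⊗[ℂ] A) ⊗[ℂ] (F m).A →ₗ[ℂ] (L.L ⊗[ℂ] A) ⊗[ℂ] (F m).A}
    {BrA : ∀ m, (L.L ⊗[ℂ] A) ⊗[ℂ] (F m).A →ₗ[ℂ] (L.L ⊗[ℂ] A) ⊗[ℂ] (F m).A →ₗ[ℂ]
      (L.L ⊗[ℂ] A) ⊗[ℂ] (F m).A}
    (hA : ∀ m, IsTensorDGLA (F m) L (DA m) (BrA m))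
    {DB : (L.L ⊗[ℂ] B) ⊗[ℂ] (F (n + 2)).A →ₗ[ℂ] (L.L ⊗[ℂ] B) ⊗[ℂ] (F (n + 2)).A}
    {BrB : (L.L ⊗[ℂ] B) ⊗[ℂ] (F (n + 2)).A →ₗ[ℂ] (L.L ⊗[ℂ] B) ⊗[ℂ] (F (n + 2)).A →ₗ[ℂ]
      (L.L ⊗[ℂ] B) ⊗[ℂ] (F (n + 2)).A}
    (hB : IsTensorDGLA (F (n + 2)) L DB BrB) (π : A →ₐ[ℂ] B) (hI : ∀ a ∈ I, ∀ b ∈ I, a * b ∈ I)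
    (hIπ : ∀ a ∈ I, ∀ b ∈ I, π b = 0 → a * b = 0) (hJ : J ≤ I.map π.toLinearMap)
    {ψ : ∀ i : Fin (n + 3), i ≠ k → (L.L ⊗[ℂ] A) ⊗[ℂ] (F (n + 1)).A}
    (hψI : ∀ i hi, ψ i hi ∈ totalDegree (F (n + 1)) L I 1)
    (hψ : ∀ i hi, curvature (DA (n + 1)) (BrA (n + 1)) (ψ i hi) = 0)
    (hψc : IsHornFamily (fun i => (pb n i).toLinearMap.lTensor (L.L ⊗[ℂ] A)) k ψ)
    {φB : (L.L ⊗[ℂ] B) ⊗[ℂ] (F (n + 2)).A} (hφBJ : φB ∈ totalDegree (F (n + 2)) L J 1)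
    (hφB : curvature DB BrB φB = 0)
    (hres : ∀ i hi, (pb (n + 1) i).toLinearMap.lTensor (L.L ⊗[ℂ] B) φB =
      tensorMap L π.toLinearMap LinearMap.id (ψ i hi)) :
    ∃ φ ∈ totalDegree (F (n + 2)) L I 1, curvature (DA (n + 2)) (BrA (n + 2)) φ = 0 ∧
      (∀ i hi, (pb (n + 1) i).toLinearMap.lTensor (L.L ⊗[ℂ] A) φ = ψ i hi) ∧
      tensorMap L π.toLinearMap LinearMap.id φ = φB := by
  set K := I ⊓ LinearMap.ker π.toLinearMap
  have hIK : ∀ a ∈ I, ∀ b ∈ K, a * b = 0 := fun a ha b hb => hIπ a ha b hb.1 hb.2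
  have hKI : ∀ a ∈ K, ∀ b ∈ I, a * b = 0 := fun a ha b hb => (mul_comm a b).trans (hIK b hb a ha)
  obtain ⟨φ, hφ, hφψ, rfl⟩ := h.exists_tensor_lift π.toLinearMap hJ hψI hψc hφBJ hres
  set o := curvature (DA (n + 2)) (BrA (n + 2)) φ
  have o_mem : o ∈ totalDegree (F (n + 2)) L K (1 + 1) :=
    mem_totalDegree_ker ((hA _).curvature_mem hI hφ)
      (((hA _).map_curvature hB π (IsDgaHom.id _) hφ).trans hφB)
  have o_closed : DA (n + 2) o = 0 :=
    (((hA _).isDGLA hI).d_curvature hφ).trans ((hA _).br_eq_zero hKI o_mem hφ)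
  have o_horn : ∀ i ≠ k, (pb (n + 1) i).toLinearMap.lTensor (L.L ⊗[ℂ] A) o = 0 := fun i hi => by
    have := (hA _).map_curvature (hA _) (AlgHom.id ℂ A) (h.isDgaHom (n + 1) i) hφ
    rwa [AlgHom.toLinearMap_id, tensorMap_id_left, hφψ i hi, hψ i hi] at this
  obtain ⟨η, e, hη⟩ := h.exists_isHornContraction n k
  obtain ⟨v, hv, hDv, hvres⟩ :=
    hη.exists_tensor_primitive (h.isDgaHom (n + 1)) (hA _) o_mem o_closed o_horn
  have hvI := totalDegree_mono (inf_le_left : K ≤ I) 1 hv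
  refine ⟨φ - v, sub_mem hφ hvI, ?_, fun i hi => ?_, ?_⟩
  · rw [curvature_sub ((hA _).br_eq_zero hIK hφ hv) ((hA _).br_eq_zero hKI hv hφ)
      ((hA _).br_eq_zero hKI hv hvI), hDv, sub_self]
  · rw [map_sub, hφψ i hi, hvres i hi, sub_zero]
  · rw [map_sub, tensorMap_eq_zero hv fun _ ha => ha.2, sub_zero]

end IsPolyDeRhamFaces

theorem maximalIdeal_le_map {R A B : Type*} [CommRing R] [CommRing A] [Algebra R A] [IsLocalRing A]
    [CommRing B] [Algebra R B] [IsLocalRing B] (π : A →ₐ[R] B) (hπ : Function.Surjective π) :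
    (IsLocalRing.maximalIdeal B).restrictScalars R ≤
      ((IsLocalRing.maximalIdeal A).restrictScalars R).map π.toLinearMap := by
  intro b hb
  obtain ⟨a, rfl⟩ := hπ b
  exact ⟨a, fun ha => hb (ha.map π), rfl⟩

theorem horn_quasi_iso_and_mc_extension_general {F : ∀ k, SimplexForms k}
    {pb : ∀ k : ℕ, Fin (k + 2) → (F (k + 1)).A →ₐ[ℂ] (F k).A} (h : IsPolyDeRhamFaces F pb)
    (n : ℕ) (k : Fin (n + 3)) :
    IsHornQuasiIso F pb n k ∧
    ∀ (A B : Type) (_ : CommRing A) (_ : Algebra ℂ A) (_ : CommRing B) (_ : Algebra ℂ B)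
      (I : Submodule ℂ A) (J : Submodule ℂ B) (π : A →ₐ[ℂ] B), (∀ a ∈ I, ∀ b ∈ I, a * b ∈ I) →
      J ≤ I.map π.toLinearMap → (∀ a ∈ I, ∀ b ∈ I, π b = 0 → a * b = 0) →
    ∀ (L : GradedDGLA)
      (DA : ∀ m, (L.L ⊗[ℂ] A) ⊗[ℂ] (F m).A →ₗ[ℂ] (L.L ⊗[ℂ] A) ⊗[ℂ] (F m).A)
      (BrA : ∀ m, (L.L ⊗[ℂ] A) ⊗[ℂ] (F m).A →ₗ[ℂ] (L.L ⊗[ℂ] A) ⊗[ℂ] (F m).A →ₗ[ℂ]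
        (L.L ⊗[ℂ] A) ⊗[ℂ] (F m).A)
      (DB : ∀ m, (L.L ⊗[ℂ] B) ⊗[ℂ] (F m).A →ₗ[ℂ] (L.L ⊗[ℂ] B) ⊗[ℂ] (F m).A)
      (BrB : ∀ m, (L.L ⊗[ℂ] B) ⊗[ℂ] (F m).A →ₗ[ℂ] (L.L ⊗[ℂ] B) ⊗[ℂ] (F m).A →ₗ[ℂ]
        (L.L ⊗[ℂ] B) ⊗[ℂ] (F m).A),
      (∀ m, IsTensorDGLA (F m) L (DA m) (BrA m)) → (∀ m, IsTensorDGLA (F m) L (DB m) (BrB m)) →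
    ∀ ψ : ∀ i : Fin (n + 3), i ≠ k → (L.L ⊗[ℂ] A) ⊗[ℂ] (F (n + 1)).A,
      (∀ i hi, IsMCsimp F L A I DA BrA (n + 1) (ψ i hi)) →
      IsHornFamily (fun i => (pb n i).toLinearMap.lTensor (L.L ⊗[ℂ] A)) k ψ →
    ∀ φB : (L.L ⊗[ℂ] B) ⊗[ℂ] (F (n + 2)).A, IsMCsimp F L B J DB BrB (n + 2) φB →
      (∀ i hi, (pb (n + 1) i).toLinearMap.lTensor (L.L ⊗[ℂ] B) φB =
        tensorMap L π.toLinearMap LinearMap.id (ψ i hi)) →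
    ∃ φA, IsMCsimp F L A I DA BrA (n + 2) φA ∧
      (∀ i hi, (pb (n + 1) i).toLinearMap.lTensor (L.L ⊗[ℂ] A) φA = ψ i hi) ∧
      tensorMap L π.toLinearMap LinearMap.id φA = φB := by
  refine ⟨h.isHornQuasiIso n k, fun A B _ _ _ _ I J π hI hJ hIπ L DA BrA DB BrB hA hB ψ hψ hψc φB
    hφB hres => ?_⟩
  obtain ⟨φA, hφAI, hφA, hφAψ, hφAφB⟩ := h.exists_maurerCartan_extension hA (hB _) π hI hIπ hJ
    (fun i hi => (hψ i hi).1) (fun i hi => (hψ i hi).2) hψc hφB.1 hφB.2 hres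
  exact ⟨φA, ⟨hφAI, hφA⟩, hφAψ, hφAφB⟩

/-- (a) The restriction map `A^*(Δ_{n+2}) → A^*(Λ^k_{n+2})` to
the k-th horn is a quasi-isomorphism (bijective on cohomology, stated
elementwise); (b) consequently, the obstruction to extending a Maurer–Cartan
element of `L ⊗ m_A ⊗ A^*(Δ_•)` from the horn to the simplex along a small
extension `π : A → B` vanishes: given compatible Maurer–Cartan elements `ψ i`
on the faces of the horn over `A`, and a Maurer–Cartan element `φ_B` over `B`
on the whole simplex whose faces are the images of the `ψ i`, there is a
Maurer–Cartan element `φ_A` over `A` on the whole simplex with faces `ψ i`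
lifting `φ_B`. -/
theorem horn_quasi_iso_and_mc_extension
    (F : ∀ k, SimplexForms k) (hF : ∀ k, IsPolyDeRham (F k))
    (pb : ∀ (k : ℕ) (i : Fin (k + 2)), (F (k + 1)).A →ₐ[ℂ] (F k).A)
    (hpb : ∀ (k : ℕ) (i : Fin (k + 2)),
      PullbackProp (F (k + 1)) (F k) (Fin.succAbove i) (pb k i))
    (n : ℕ) (k : Fin (n + 3)) :
    -- (a) the restriction to the k-th horn is a quasi-isomorphism:
    -- surjectivity on H^{q+1}
    ((∀ (q : ℕ) (t : ∀ i : Fin (n + 3), i ≠ k → (F (n + 1)).A),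
      HornCompat F pb n k t →
      (∀ (i : Fin (n + 3)) (hi : i ≠ k), t i hi ∈ (F (n + 1)).grading (q + 1)) →
      (∀ (i : Fin (n + 3)) (hi : i ≠ k), (F (n + 1)).d (t i hi) = 0) →
      ∃ β : (F (n + 2)).A, β ∈ (F (n + 2)).grading (q + 1) ∧ (F (n + 2)).d β = 0 ∧
        ∃ s : ∀ i : Fin (n + 3), i ≠ k → (F (n + 1)).A,
          HornCompat F pb n k s ∧
          (∀ (i : Fin (n + 3)) (hi : i ≠ k), s i hi ∈ (F (n + 1)).grading q) ∧
          (∀ (i : Fin (n + 3)) (hi : i ≠ k),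
            (F (n + 1)).d (s i hi) = pb (n + 1) i β - t i hi)) ∧
    -- surjectivity on H⁰
    (∀ (t : ∀ i : Fin (n + 3), i ≠ k → (F (n + 1)).A),
      HornCompat F pb n k t →
      (∀ (i : Fin (n + 3)) (hi : i ≠ k), t i hi ∈ (F (n + 1)).grading 0) →
      (∀ (i : Fin (n + 3)) (hi : i ≠ k), (F (n + 1)).d (t i hi) = 0) →
      ∃ β : (F (n + 2)).A, β ∈ (F (n + 2)).grading 0 ∧ (F (n + 2)).d β = 0 ∧
        ∀ (i : Fin (n + 3)) (hi : i ≠ k), pb (n + 1) i β = t i hi) ∧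
    -- injectivity on H^{q+1}
    (∀ (q : ℕ) (β : (F (n + 2)).A), β ∈ (F (n + 2)).grading (q + 1) →
      (F (n + 2)).d β = 0 →
      (∃ s : ∀ i : Fin (n + 3), i ≠ k → (F (n + 1)).A,
        HornCompat F pb n k s ∧
        (∀ (i : Fin (n + 3)) (hi : i ≠ k), s i hi ∈ (F (n + 1)).grading q) ∧
        (∀ (i : Fin (n + 3)) (hi : i ≠ k),
          (F (n + 1)).d (s i hi) = pb (n + 1) i β)) →
      ∃ b ∈ (F (n + 2)).grading q, (F (n + 2)).d b = β) ∧
    -- injectivity on H⁰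
    (∀ β : (F (n + 2)).A, β ∈ (F (n + 2)).grading 0 → (F (n + 2)).d β = 0 →
      (∀ (i : Fin (n + 3)) (hi : i ≠ k), pb (n + 1) i β = 0) → β = 0)) ∧
    -- (b) vanishing of the obstruction to Maurer–Cartan horn extension along a
    -- small extension π : A → B
    (∀ (A B : Type) (_ : CommRing A) (_ : Algebra ℂ A) (_ : IsArtinianRing A)
        (_ : IsLocalRing A) (_ : CommRing B) (_ : Algebra ℂ B)
        (_ : IsArtinianRing B) (_ : IsLocalRing B)
        (π : A →ₐ[ℂ] B), Function.Surjective π →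
      (∀ a ∈ IsLocalRing.maximalIdeal A, ∀ j : A, π j = 0 → a * j = 0) →
      ∀ (L : GradedDGLA)
        (DA : ∀ m, (L.L ⊗[ℂ] A) ⊗[ℂ] (F m).A →ₗ[ℂ] (L.L ⊗[ℂ] A) ⊗[ℂ] (F m).A),
        (∀ (m : ℕ) (p : ℤ) (q : ℕ) (x : L.L) (a : A) (α : (F m).A),
          x ∈ L.gr p → α ∈ (F m).grading q →
          DA m ((x ⊗ₜ a) ⊗ₜ α) =
            ((L.dL x ⊗ₜ a) ⊗ₜ α) + sgn p • ((x ⊗ₜ a) ⊗ₜ ((F m).d α))) →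
      ∀ (BrA : ∀ m, (L.L ⊗[ℂ] A) ⊗[ℂ] (F m).A →ₗ[ℂ]
          (L.L ⊗[ℂ] A) ⊗[ℂ] (F m).A →ₗ[ℂ] (L.L ⊗[ℂ] A) ⊗[ℂ] (F m).A),
        (∀ (m : ℕ) (p p' : ℤ) (q q' : ℕ) (x y : L.L) (a b : A)
            (α β : (F m).A), x ∈ L.gr p → y ∈ L.gr p' →
          α ∈ (F m).grading q → β ∈ (F m).grading q' →
          BrA m ((x ⊗ₜ a) ⊗ₜ α) ((y ⊗ₜ b) ⊗ₜ β) =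
            sgn ((q : ℤ) * p') • ((L.br x y ⊗ₜ (a * b)) ⊗ₜ (α * β))) →
      ∀ (DB : ∀ m, (L.L ⊗[ℂ] B) ⊗[ℂ] (F m).A →ₗ[ℂ] (L.L ⊗[ℂ] B) ⊗[ℂ] (F m).A),
        (∀ (m : ℕ) (p : ℤ) (q : ℕ) (x : L.L) (a : B) (α : (F m).A),
          x ∈ L.gr p → α ∈ (F m).grading q →
          DB m ((x ⊗ₜ a) ⊗ₜ α) =
            ((L.dL x ⊗ₜ a) ⊗ₜ α) + sgn p • ((x ⊗ₜ a) ⊗ₜ ((F m).d α))) →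
      ∀ (BrB : ∀ m, (L.L ⊗[ℂ] B) ⊗[ℂ] (F m).A →ₗ[ℂ]
          (L.L ⊗[ℂ] B) ⊗[ℂ] (F m).A →ₗ[ℂ] (L.L ⊗[ℂ] B) ⊗[ℂ] (F m).A),
        (∀ (m : ℕ) (p p' : ℤ) (q q' : ℕ) (x y : L.L) (a b : B)
            (α β : (F m).A), x ∈ L.gr p → y ∈ L.gr p' →
          α ∈ (F m).grading q → β ∈ (F m).grading q' →
          BrB m ((x ⊗ₜ a) ⊗ₜ α) ((y ⊗ₜ b) ⊗ₜ β) =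
            sgn ((q : ℤ) * p') • ((L.br x y ⊗ₜ (a * b)) ⊗ₜ (α * β))) →
      -- compatible MC elements on the faces of the horn over A
      ∀ (ψ : ∀ i : Fin (n + 3), i ≠ k → (L.L ⊗[ℂ] A) ⊗[ℂ] (F (n + 1)).A),
        (∀ (i : Fin (n + 3)) (hi : i ≠ k),
          IsMCsimp F L A ((IsLocalRing.maximalIdeal A).restrictScalars ℂ) DA BrA
            (n + 1) (ψ i hi)) →
        (∀ (i j : Fin (n + 3)) (hi : i ≠ k) (hj : j ≠ k) (hij : i.1 < j.1),
          LinearMap.lTensor (L.L ⊗[ℂ] A)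
              (pb n ⟨i.1, by have := j.isLt; omega⟩).toLinearMap (ψ j hj) =
            LinearMap.lTensor (L.L ⊗[ℂ] A)
              (pb n ⟨j.1 - 1, by have := j.isLt; omega⟩).toLinearMap (ψ i hi)) →
      -- a compatible MC lift over B on the whole simplex
      ∀ (φB : (L.L ⊗[ℂ] B) ⊗[ℂ] (F (n + 2)).A),
        IsMCsimp F L B ((IsLocalRing.maximalIdeal B).restrictScalars ℂ) DB BrB
          (n + 2) φB →
        (∀ (i : Fin (n + 3)) (hi : i ≠ k),
          LinearMap.lTensor (L.L ⊗[ℂ] B) (pb (n + 1) i).toLinearMap φB =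
            TensorProduct.map (LinearMap.lTensor L.L π.toLinearMap) LinearMap.id
              (ψ i hi)) →
      -- then an extension to the whole simplex over A exists
      ∃ φA : (L.L ⊗[ℂ] A) ⊗[ℂ] (F (n + 2)).A,
        IsMCsimp F L A ((IsLocalRing.maximalIdeal A).restrictScalars ℂ) DA BrA
          (n + 2) φA ∧
        (∀ (i : Fin (n + 3)) (hi : i ≠ k),
          LinearMap.lTensor (L.L ⊗[ℂ] A) (pb (n + 1) i).toLinearMap φA = ψ i hi) ∧
        TensorProduct.map (LinearMap.lTensor L.L π.toLinearMap) LinearMap.id φA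
          = φB) := by
  obtain ⟨hqi, hmc⟩ := horn_quasi_iso_and_mc_extension_general ⟨hF, hpb⟩ n k
  exact ⟨hqi, fun A B _ _ _ _ _ _ _ _ π hπ hsmall L DA hDA BrA hBrA DB hDB BrB hBrB =>
    hmc A B _ _ _ _ _ _ π (fun a _ b hb => Ideal.mul_mem_left _ a hb) (maximalIdeal_le_map π hπ)
      (fun a ha b _ => hsmall a ha b) L DA BrA DB BrB (fun m => .of_zsmul (hDA m) (hBrA m))
      fun m => .of_zsmul (hDB m) (hBrB m)⟩
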